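/- arXiv:2011.05451 — 9 statements merged into one kernel-verified Lean document; each statement's English description precedes it below -/
import Mathlib

section
/- Let L ≥ 1 be odd and let f_0, …, f_{L−1} : ℝ → ℂ be continuous 1-periodic functions, each with an absolutely convergent Fourier series. Then ∫_{[0,1]^L} ∏_{i=0}^{L−1} f_i(x_{(i+1) mod L} − x_{(i−1) mod L}) dx_0⋯dx_{L−1} = ∑_{ℓ∈ℤ} ∏_{i=0}^{L−1} f̂_i(ℓ). -/
open MeasureTheory

/-- The `ℓ`-th Fourier coefficient of a 1-periodic function `f : ℝ → ℂ`,
`f̂(ℓ) = ∫₀¹ f(x) e^{−2πiℓx} dx`. -/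
noncomputable def fourierCoeffR (f : ℝ → ℂ) (ℓ : ℤ) : ℂ :=
  ∫ x in (0:ℝ)..1, f x * Complex.exp (-(2 * Real.pi * Complex.I * ℓ * x))

/-!
Expand each factor in its Fourier series; by absolute convergence the product becomes a series over
`m : ι → ℤ` which may be integrated termwise. By orthogonality of the characters on the cube, the
term of frequency vector `m` survives only if the linear form `x ↦ ∑ i, m i * (x (σ i) - x (τ i))`
vanishes, that is, if `m` is constant along the cycles of `τ⁻¹ * σ`. For `σ i = i + 1` and
`τ i = i - 1` on `Fin L` this permutation is the translation by `2`, which is a single cycle when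
`L` is odd; hence exactly the constant `m` remain.
-/

section ProdTsum

open Filter Topology

variable {ι : Type*} [Fintype ι] {κ : ι → Type*}

theorem tendsto_piFinset_atTop [DecidableEq ι] :
    Tendsto (Fintype.piFinset : (∀ i, Finset (κ i)) → Finset (∀ i, κ i)) atTop atTop := by
  classical
  refine tendsto_atTop.mpr fun u => ?_
  filter_upwards [eventually_ge_atTop fun i => u.image (· i)] with s hs m hm
  exact Fintype.mem_piFinset.mpr fun i => hs i (Finset.mem_image_of_mem _ hm)

theorem prod_tsum_eq_tsum_prod_pi {R : Type*} [CommSemiring R] [TopologicalSpace R] [T2Space R]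
    [IsTopologicalSemiring R] {a : ∀ i, κ i → R} (ha : ∀ i, Summable (a i))
    (hprod : Summable fun m : ∀ i, κ i => ∏ i, a i (m i)) :
    ∏ i, ∑' k, a i k = ∑' m : ∀ i, κ i, ∏ i, a i (m i) := by
  classical
  have tendsto_eval (i : ι) :
      Tendsto (Function.eval i : (∀ i, Finset (κ i)) → Finset (κ i)) atTop atTop :=
    tendsto_atTop_atTop_of_monotone (Function.monotone_eval i) fun s =>
      ⟨Function.update ⊥ i s, by simp⟩
  have tendsto_prod : Tendsto (fun s : ∀ i, Finset (κ i) => ∏ i, ∑ k ∈ s i, a i k) atTop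
      (𝓝 (∏ i, ∑' k, a i k)) :=
    tendsto_finsetProd _ fun i _ => (ha i).hasSum.comp (tendsto_eval i)
  simp only [Finset.prod_univ_sum] at tendsto_prod
  exact tendsto_nhds_unique tendsto_prod (hprod.hasSum.comp tendsto_piFinset_atTop)

theorem summable_norm_prod_pi {R : Type*} [NormedCommRing R] [NormOneClass R] {a : ∀ i, κ i → R}
    (ha : ∀ i, Summable fun k => ‖a i k‖) :
    Summable fun m : ∀ i, κ i => ‖∏ i, a i (m i)‖ := by
  classical
  refine summable_of_sum_le (c := ∏ i, ∑' k, ‖a i k‖) (fun _ => norm_nonneg _) fun u => ?_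
  have u_subset : u ⊆ Fintype.piFinset fun i => u.image (· i) := fun m hm =>
    Fintype.mem_piFinset.mpr fun i => Finset.mem_image_of_mem _ hm
  calc
    ∑ m ∈ u, ‖∏ i, a i (m i)‖ ≤ ∑ m ∈ u, ∏ i, ‖a i (m i)‖ := by
      gcongr
      exact Finset.norm_prod_le _ _
    _ ≤ ∑ m ∈ Fintype.piFinset fun i => u.image (· i), ∏ i, ‖a i (m i)‖ := by
      gcongr
    _ = ∏ i, ∑ k ∈ u.image (· i), ‖a i k‖ := by rw [Finset.prod_univ_sum]
    _ ≤ ∏ i, ∑' k, ‖a i k‖ := by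
      gcongr with i
      exact (ha i).sum_le_tsum _ fun _ _ => norm_nonneg _

end ProdTsum

section Character

open Real

/-- The character `t ↦ e^{2πit}` of `ℝ`. Unlike the `Circle`-valued `Real.fourierChar` it takes
values in `ℂ`, so that it can be summed and integrated without coercions. -/
noncomputable def expTwoPiI (t : ℝ) : ℂ :=
  Complex.exp (2 * π * Complex.I * t)

@[fun_prop]
theorem continuous_expTwoPiI : Continuous expTwoPiI := by
  unfold expTwoPiI
  fun_prop

theorem norm_expTwoPiI (t : ℝ) : ‖expTwoPiI t‖ = 1 := by
  rw [expTwoPiI, show 2 * π * Complex.I * t = (2 * π * t : ℝ) * Complex.I by push_cast; ring,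
    Complex.norm_exp_ofReal_mul_I]

theorem expTwoPiI_sum {ι : Type*} (s : Finset ι) (t : ι → ℝ) :
    expTwoPiI (∑ i ∈ s, t i) = ∏ i ∈ s, expTwoPiI (t i) := by
  simp only [expTwoPiI, ← Complex.exp_sum, Complex.ofReal_sum, Finset.mul_sum]

theorem integral_expTwoPiI_int_mul (k : ℤ) :
    ∫ x in Set.Icc (0 : ℝ) 1, expTwoPiI (k * x) = if k = 0 then 1 else 0 := by
  rw [integral_Icc_eq_integral_Ioc, ← intervalIntegral.integral_of_le zero_le_one]
  split_ifs with hk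
  · simp [hk, expTwoPiI]
  · have freq_ne_zero : 2 * π * Complex.I * (k : ℂ) ≠ 0 :=
      mul_ne_zero Complex.two_pi_I_ne_zero (Int.cast_ne_zero.mpr hk)
    have exp_freq : Complex.exp (2 * π * Complex.I * k) = 1 :=
      Complex.exp_eq_one_iff.mpr ⟨k, by ring⟩
    simp only [expTwoPiI, Complex.ofReal_mul, Complex.ofReal_intCast, ← mul_assoc]
    simp [integral_exp_mul_complex freq_ne_zero, exp_freq]

end Character

section Cube

open Matrix

variable {ι κ : Type*} [Fintype ι] [Fintype κ]

theorem volume_restrict_Icc_pi (a b : κ → ℝ) :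
    (volume : Measure (κ → ℝ)).restrict (Set.Icc a b) =
      Measure.pi fun j => (volume : Measure ℝ).restrict (Set.Icc (a j) (b j)) := by
  rw [← Measure.restrict_pi_pi, ← volume_pi, Set.pi_univ_Icc]

theorem integral_expTwoPiI_dotProduct (k : κ → ℤ) :
    ∫ x in Set.Icc (0 : κ → ℝ) 1, expTwoPiI ((k · : κ → ℝ) ⬝ᵥ x) = if k = 0 then 1 else 0 := by
  simp only [dotProduct, expTwoPiI_sum, volume_restrict_Icc_pi, Pi.zero_apply, Pi.one_apply]
  rw [integral_fintype_prod_eq_prod (f := fun j (x : ℝ) => expTwoPiI (k j * x))]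
  simp [integral_expTwoPiI_int_mul, Finset.prod_ite_zero, funext_iff]

theorem integral_tsum_mul_expTwoPiI_dotProduct {M : Type*} [Countable M] {c : M → ℂ}
    (hc : Summable c) (k : M → κ → ℤ) :
    ∫ x in Set.Icc (0 : κ → ℝ) 1, ∑' m, c m * expTwoPiI ((k m · : κ → ℝ) ⬝ᵥ x) =
      ∑' m : {m | k m = 0}, c m := by
  have integrable_term (m : M) :
      IntegrableOn (fun x => c m * expTwoPiI ((k m · : κ → ℝ) ⬝ᵥ x)) (Set.Icc 0 1) :=
    Continuous.integrableOn_Icc (by fun_prop)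
  have summable_norm : Summable fun m =>
      ∫ x in Set.Icc (0 : κ → ℝ) 1, ‖c m * expTwoPiI ((k m · : κ → ℝ) ⬝ᵥ x)‖ := by
    simpa [norm_expTwoPiI] using hc.norm.mul_left _
  rw [← integral_tsum_of_summable_integral_norm integrable_term summable_norm]
  simp only [integral_const_mul, integral_expTwoPiI_dotProduct, mul_ite, mul_one, mul_zero]
  exact ((tsum_subtype {m | k m = 0} c).trans (by simp [Set.indicator_apply])).symm

theorem prod_tsum_mul_expTwoPiI {a : ι → ℤ → ℂ} (ha : ∀ i, Summable (a i)) (y : ι → ℝ) :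
    ∏ i, ∑' l, a i l * expTwoPiI (l * y i) =
      ∑' m : ι → ℤ, (∏ i, a i (m i)) * expTwoPiI ((m · : ι → ℝ) ⬝ᵥ y) := by
  have ha' (i : ι) : Summable fun l : ℤ => ‖a i l * expTwoPiI (l * y i)‖ := by
    simpa [norm_expTwoPiI] using (ha i).norm
  rw [prod_tsum_eq_tsum_prod_pi (fun i => (ha' i).of_norm) (summable_norm_prod_pi ha').of_norm]
  simp only [dotProduct, expTwoPiI_sum, Finset.prod_mul_distrib]

theorem integral_prod_tsum_mul_expTwoPiI_mulVec (A : Matrix ι κ ℤ) {a : ι → ℤ → ℂ}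
    (ha : ∀ i, Summable (a i)) :
    ∫ x in Set.Icc (0 : κ → ℝ) 1,
        ∏ i, ∑' l, a i l * expTwoPiI (l * (A.map (Int.castRingHom ℝ) *ᵥ x) i) =
      ∑' m : {m : ι → ℤ | m ᵥ* A = 0}, ∏ i, a i (m.1 i) := by
  have dotProduct_mulVec_cast (m : ι → ℤ) (x : κ → ℝ) :
      (m · : ι → ℝ) ⬝ᵥ (A.map (Int.castRingHom ℝ) *ᵥ x) = ((m ᵥ* A) · : κ → ℝ) ⬝ᵥ x := by
    rw [dotProduct_mulVec]
    congr 1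
    ext j
    exact (RingHom.map_vecMul (Int.castRingHom ℝ) A m j).symm
  simp only [prod_tsum_mul_expTwoPiI ha, dotProduct_mulVec_cast]
  exact integral_tsum_mul_expTwoPiI_dotProduct
    (summable_norm_prod_pi fun i => (ha i).norm).of_norm (· ᵥ* A)

theorem integral_prod_tsum_mul_expTwoPiI_sub (σ τ : Equiv.Perm ι) {a : ι → ℤ → ℂ}
    (ha : ∀ i, Summable (a i)) :
    ∫ x in Set.Icc (0 : ι → ℝ) 1, ∏ i, ∑' l, a i l * expTwoPiI (l * (x (σ i) - x (τ i))) =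
      ∑' m : {m : ι → ℤ | m ∘ σ.symm = m ∘ τ.symm}, ∏ i, a i (m.1 i) := by
  classical
  let A := σ.permMatrix ℤ - τ.permMatrix ℤ
  have permMatrix_cast (ρ : Equiv.Perm ι) :
      (ρ.permMatrix ℤ).map (Int.castRingHom ℝ) = ρ.permMatrix ℝ := by
    ext i j
    simp [Equiv.Perm.permMatrix, PEquiv.toMatrix_apply]
  have mulVec_apply (x : ι → ℝ) (i : ι) :
      (A.map (Int.castRingHom ℝ) *ᵥ x) i = x (σ i) - x (τ i) := by
    simp only [A, Matrix.map_sub _ (map_sub _), permMatrix_cast, sub_mulVec, permMatrix_mulVec,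
      Pi.sub_apply, Function.comp_apply]
  have kernel_eq : {m : ι → ℤ | m ᵥ* A = 0} = {m | m ∘ σ.symm = m ∘ τ.symm} := by
    simp only [A, vecMul_sub, vecMul_permMatrix, sub_eq_zero]
  rw [← kernel_eq]
  simpa only [mulVec_apply] using integral_prod_tsum_mul_expTwoPiI_mulVec A ha

end Cube

section Cycle

open Equiv

theorem apply_eq_of_sameCycle {α β : Type*} {ρ : Perm α} {m : α → β} (hm : m ∘ ρ = m) {x y : α}
    (h : ρ.SameCycle x y) : m x = m y := by
  have apply_perm (z : α) : m (ρ z) = m z := congrFun hm z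
  obtain ⟨n, rfl⟩ := h
  induction n with
  | zero => rfl
  | succ n ih => rw [ih, add_comm, zpow_add, zpow_one, Perm.mul_apply, apply_perm]
  | pred n ih =>
    rw [ih, ← apply_perm ((ρ ^ (-(n : ℤ) - 1)) x), ← Perm.mul_apply, mul_self_zpow, sub_add_cancel]

theorem setOf_comp_symm_eq_range_const {α : Type*} (β : Type*) [Nonempty α] {σ τ : Perm α}
    (h : (τ⁻¹ * σ).IsCycleOn Set.univ) :
    {m : α → β | m ∘ σ.symm = m ∘ τ.symm} = Set.range (Function.const α) := by
  ext m
  constructor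
  · intro hm
    have invariant : m ∘ (τ⁻¹ * σ) = m := by
      ext x
      simpa using (congrFun hm (σ x)).symm
    obtain ⟨x⟩ := ‹Nonempty α›
    exact ⟨m x, funext fun y =>
      apply_eq_of_sameCycle invariant (h.2 (Set.mem_univ x) (Set.mem_univ y))⟩
  · rintro ⟨b, rfl⟩
    rfl

theorem sameCycle_addRight {G : Type*} [AddGroup G] {g x y : G}
    (h : -x + y ∈ AddSubgroup.zmultiples g) : (Equiv.addRight g).SameCycle x y := by
  obtain ⟨n, hn : n • g = -x + y⟩ := h
  rw [eq_neg_add_iff_add_eq] at hn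
  exact ⟨n, by simpa using hn⟩

theorem isCycleOn_univ_addRight {G : Type*} [AddGroup G] {g : G}
    (hg : ∀ x, x ∈ AddSubgroup.zmultiples g) : (Equiv.addRight g).IsCycleOn Set.univ :=
  ⟨Set.bijOn_univ.mpr (Equiv.bijective _), fun _ _ _ _ => sameCycle_addRight (hg _)⟩

theorem mem_zmultiples_nsmul_of_coprime {G : Type*} [AddGroup G] {g : G}
    (hg : ∀ x, x ∈ AddSubgroup.zmultiples g) {k : ℕ} (hk : k.Coprime (Nat.card G)) (x : G) :
    x ∈ AddSubgroup.zmultiples (k • g) := by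
  obtain ⟨n, rfl⟩ := hg x
  refine zsmul_mem (mem_zmultiples_nsmul_iff.mpr ?_) n
  rwa [addOrderOf_eq_card_of_forall_mem_zmultiples hg]

open scoped Fin.CommRing in
theorem mem_zmultiples_one_fin {L : ℕ} [NeZero L] (x : Fin L) :
    x ∈ AddSubgroup.zmultiples (1 : Fin L) :=
  ⟨x.val, by simp⟩

theorem isCycleOn_univ_subRight_inv_mul_addRight {L : ℕ} [NeZero L] (hodd : Odd L) :
    ((Equiv.subRight (1 : Fin L))⁻¹ * Equiv.addRight 1 : Perm (Fin L)).IsCycleOn Set.univ := by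
  have eq_addRight_two : (Equiv.subRight (1 : Fin L))⁻¹ * Equiv.addRight 1 =
      Equiv.addRight (2 • 1) := by
    ext
    simp [Equiv.subRight, add_assoc, two_nsmul]
  rw [eq_addRight_two]
  exact isCycleOn_univ_addRight
    (mem_zmultiples_nsmul_of_coprime mem_zmultiples_one_fin (by simpa using hodd))

end Cycle

theorem stmt1_general {ι : Type*} [Fintype ι] [Nonempty ι] {σ τ : Equiv.Perm ι}
    (hcycle : (τ⁻¹ * σ).IsCycleOn Set.univ) (f : ι → ℝ → ℂ)
    (habs : ∀ i, Summable fun ℓ : ℤ => ‖fourierCoeffR (f i) ℓ‖)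
    (hrep : ∀ i (x : ℝ),
      f i x = ∑' ℓ : ℤ, fourierCoeffR (f i) ℓ * Complex.exp (2 * Real.pi * Complex.I * ℓ * x)) :
    ∫ x in Set.Icc (0 : ι → ℝ) 1, ∏ i, f i (x (σ i) - x (τ i)) =
      ∑' ℓ : ℤ, ∏ i, fourierCoeffR (f i) ℓ := by
  have hrep' (i : ι) (x : ℝ) : f i x = ∑' ℓ : ℤ, fourierCoeffR (f i) ℓ * expTwoPiI (ℓ * x) := by
    simp only [hrep i x, expTwoPiI, Complex.ofReal_mul, Complex.ofReal_intCast, mul_assoc]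
  calc
    ∫ x in Set.Icc (0 : ι → ℝ) 1, ∏ i, f i (x (σ i) - x (τ i))
      = ∫ x in Set.Icc (0 : ι → ℝ) 1,
          ∏ i, ∑' ℓ : ℤ, fourierCoeffR (f i) ℓ * expTwoPiI (ℓ * (x (σ i) - x (τ i))) := by
        simp only [← hrep']
    _ = ∑' m : {m : ι → ℤ | m ∘ σ.symm = m ∘ τ.symm}, ∏ i, fourierCoeffR (f i) (m.1 i) :=
        integral_prod_tsum_mul_expTwoPiI_sub σ τ fun i => (habs i).of_norm
    _ = ∑' m : Set.range (Function.const ι : ℤ → ι → ℤ), ∏ i, fourierCoeffR (f i) (m.1 i) := by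
        rw [setOf_comp_symm_eq_range_const ℤ hcycle]
    _ = ∑' ℓ : ℤ, ∏ i, fourierCoeffR (f i) ℓ :=
        tsum_range (fun m : ι → ℤ => ∏ i, fourierCoeffR (f i) (m i)) Function.const_injective

theorem stmt1 (L : ℕ) [NeZero L] (hodd : Odd L) (f : Fin L → ℝ → ℂ)
    (hcont : ∀ i, Continuous (f i))
    (hper : ∀ i (x : ℝ), f i (x + 1) = f i x)
    (habs : ∀ i, Summable fun ℓ : ℤ => ‖fourierCoeffR (f i) ℓ‖)
    (hrep : ∀ i (x : ℝ),
      f i x = ∑' ℓ : ℤ, fourierCoeffR (f i) ℓ * Complex.exp (2 * Real.pi * Complex.I * ℓ * x)) :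
    (∫ x in Set.Icc (0 : Fin L → ℝ) 1, ∏ i, f i (x (i + 1) - x (i - 1))) =
      ∑' ℓ : ℤ, ∏ i, fourierCoeffR (f i) ℓ := by
  exact stmt1_general (isCycleOn_univ_subRight_inv_mul_addRight hodd) f habs hrep
end

section
/- Let L ≥ 2 be even and let f_0, …, f_{L−1} : ℝ → ℂ be continuous 1-periodic functions, each with an absolutely convergent Fourier series. Then ∫_{[0,1]^L} ∏_{i=0}^{L−1} f_i(x_{(i+1) mod L} − x_{(i−1) mod L}) dx_0⋯dx_{L−1} = (∑_{ℓ∈ℤ} ∏_{0≤i≤L−1, i even} f̂_i(ℓ)) · (∑_{ℓ∈ℤ} ∏_{0≤i≤L−1, i odd} f̂_i(ℓ)). -/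
open MeasureTheory

/-!
Multiplying out the series turns `∏ i, f i ((A x) i)`, for an integer matrix `A`, into a sum over
frequency vectors `k` of `(∏ i, c i (k i)) e^{2πi ⟨k A, x⟩}`. Integration over the unit cube keeps
the left kernel of `A`. When `(A x) i = x (σ i) - x (τ i)` for two permutations, `k A = 0` says
that `k` is constant on the cycles of `τ⁻¹ σ`, so the sum over `k` factors into one sum over `ℤ`
for each cycle. The shifts `i ↦ i + 1` and `i ↦ i - 1` of `Fin L` give `τ⁻¹ σ = (· + 2)`, whose
cycles, for even `L`, are the two parity classes.
-/

open Function Matrix Equiv.Perm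
open scoped FourierTransform

section ProductOfSeries

lemma measure_pi_count {ι : Type*} [Fintype ι] {α : ι → Type*} [∀ i, Countable (α i)]
    [∀ i, MeasurableSpace (α i)] [∀ i, MeasurableSingletonClass (α i)] :
    Measure.pi (fun i ↦ (Measure.count : Measure (α i))) = Measure.count :=
  Measure.ext_of_singleton fun k ↦ by simp

variable {ι α : Type*} [Countable α]

lemma summable_norm_pi_prod [Fintype ι] {R : Type*} [NormedCommRing R] {g : ι → α → R}
    (hg : ∀ i, Summable fun a ↦ ‖g i a‖) : Summable fun k : ι → α ↦ ‖∏ i, g i (k i)‖ := by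
  let _ : MeasurableSpace α := ⊤
  have h := Integrable.fintype_prod (μ := fun _ ↦ Measure.count)
    fun i ↦ integrable_count_iff.2 (hg i)
  rw [measure_pi_count] at h
  exact integrable_count_iff.1 h

lemma summable_norm_finset_prod {R : Type*} [NormedCommRing R] {s : Finset ι} (hs : s.Nonempty)
    {g : ι → α → R} (hg : ∀ i ∈ s, Summable fun a ↦ ‖g i a‖) :
    Summable fun a ↦ ‖∏ i ∈ s, g i a‖ := by
  have : Nonempty s := hs.to_subtype
  refine ((summable_norm_pi_prod fun i : s ↦ hg i i.2).comp_injective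
    (const_injective (α := s))).congr fun a ↦ ?_
  exact congrArg norm (s.prod_coe_sort (g · a))

lemma prod_tsum_eq_tsum_pi [Fintype ι] {𝕜 : Type*} [RCLike 𝕜] {g : ι → α → 𝕜}
    (hg : ∀ i, Summable fun a ↦ ‖g i a‖) :
    ∏ i, ∑' a, g i a = ∑' k : ι → α, ∏ i, g i (k i) := by
  let _ : MeasurableSpace α := ⊤
  have hint (i : ι) : Integrable (g i) Measure.count := integrable_count_iff.2 (hg i)
  have hint_prod : Integrable (fun k : ι → α ↦ ∏ i, g i (k i)) Measure.count :=
    integrable_count_iff.2 (summable_norm_pi_prod hg)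
  have hfubini := integral_fintype_prod_eq_prod g (μ := fun _ ↦ Measure.count)
  simpa [measure_pi_count, integral_countable hint_prod, integral_countable (hint _)]
    using hfubini.symm

lemma tsum_prod_comp_eq_prod_tsum [Fintype ι] {β : Type*} [Fintype β] [DecidableEq β]
    {𝕜 : Type*} [RCLike 𝕜] {q : ι → β} (hq : Surjective q) {g : ι → α → 𝕜}
    (hg : ∀ i, Summable fun a ↦ ‖g i a‖) :
    ∑' k : β → α, ∏ i, g i (k (q i)) = ∏ b, ∑' a, ∏ i with q i = b, g i a := by
  have hfiber (b : β) : (Finset.univ.filter fun i ↦ q i = b).Nonempty :=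
    (hq b).imp fun i hi ↦ by simpa using hi
  have hsum (b : β) : Summable fun a ↦ ‖∏ i with q i = b, g i a‖ :=
    summable_norm_finset_prod (hfiber b) fun i _ ↦ hg i
  rw [prod_tsum_eq_tsum_pi hsum]
  refine tsum_congr fun k ↦ ?_
  rw [← Finset.prod_fiberwise Finset.univ q]
  refine Finset.prod_congr rfl fun b _ ↦ Finset.prod_congr rfl fun i hi ↦ ?_
  rw [(Finset.mem_filter.1 hi).2]

end ProductOfSeries

section Torus

lemma fourierChar_intCast_mul (n : ℤ) (t : ℝ) :
    (𝐞 (n * t) : ℂ) = Complex.exp (2 * Real.pi * Complex.I * n * t) := by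
  rw [Real.fourierChar_apply]
  push_cast
  ring_nf

lemma setIntegral_fourierChar_intCast_mul (n : ℤ) :
    ∫ t in Set.Icc (0 : ℝ) 1, (𝐞 (n * t) : ℂ) = if n = 0 then 1 else 0 := by
  simp_rw [fourierChar_intCast_mul]
  rw [integral_Icc_eq_integral_Ioc, ← intervalIntegral.integral_of_le zero_le_one]
  split_ifs with hn
  · simp [hn]
  · have hperiod : Complex.exp (2 * Real.pi * Complex.I * n) = 1 := by
      rw [mul_comm]
      exact Complex.exp_int_mul_two_pi_mul_I n
    rw [integral_exp_mul_complex (by simp [hn, Real.pi_ne_zero])]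
    simp [hperiod]

variable {ι κ : Type*} [Fintype ι] [Fintype κ]

lemma fourierChar_dotProduct (v w : ι → ℝ) :
    (𝐞 (v ⬝ᵥ w) : ℂ) = ∏ i, (𝐞 (v i * w i) : ℂ) := by
  simp only [Real.fourierChar_apply, dotProduct, ← Complex.exp_sum, Finset.mul_sum, Finset.sum_mul,
    Complex.ofReal_sum]

lemma setIntegral_fourierChar_intCast_dotProduct (m : κ → ℤ) :
    ∫ x in Set.Icc (0 : κ → ℝ) 1, (𝐞 ((fun j ↦ (m j : ℝ)) ⬝ᵥ x) : ℂ) =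
      if m = 0 then 1 else 0 := by
  simp_rw [fourierChar_dotProduct]
  rw [← Set.pi_univ_Icc, volume_pi, Measure.restrict_pi_pi,
    integral_fintype_prod_eq_prod fun j (t : ℝ) ↦ (𝐞 (m j * t) : ℂ)]
  simp only [Pi.zero_apply, Pi.one_apply, setIntegral_fourierChar_intCast_mul,
    Finset.prod_ite_zero, Finset.prod_const_one, Finset.mem_univ, true_imp_iff, funext_iff]

lemma prod_tsum_fourierChar_mulVec (A : Matrix ι κ ℤ) {c : ι → ℤ → ℂ}
    (hc : ∀ i, Summable fun ℓ ↦ ‖c i ℓ‖) (x : κ → ℝ) :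
    ∏ i, ∑' ℓ, c i ℓ * 𝐞 (ℓ * (A.map (↑) *ᵥ x) i) =
      ∑' k : ι → ℤ, (∏ i, c i (k i)) * 𝐞 ((fun j ↦ ((k ᵥ* A) j : ℝ)) ⬝ᵥ x) := by
  rw [prod_tsum_eq_tsum_pi fun i ↦ by simpa only [norm_mul, Circle.norm_coe, mul_one] using hc i]
  refine tsum_congr fun k ↦ ?_
  have hcast : (fun j ↦ ((k ᵥ* A) j : ℝ)) = (fun i ↦ (k i : ℝ)) ᵥ* A.map (↑) :=
    funext fun j ↦ (Int.castRingHom ℝ).map_vecMul A k j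
  rw [Finset.prod_mul_distrib, hcast, ← dotProduct_mulVec, fourierChar_dotProduct]

theorem setIntegral_prod_tsum_fourierChar_mulVec (A : Matrix ι κ ℤ) {c : ι → ℤ → ℂ}
    (hc : ∀ i, Summable fun ℓ ↦ ‖c i ℓ‖) :
    ∫ x in Set.Icc (0 : κ → ℝ) 1, ∏ i, ∑' ℓ, c i ℓ * 𝐞 (ℓ * (A.map (↑) *ᵥ x) i) =
      ∑' k : {k : ι → ℤ | k ᵥ* A = 0}, ∏ i, c i (k.1 i) := by
  have hvol : volume.real (Set.Icc (0 : κ → ℝ) 1) = 1 := by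
    simp [measureReal_def, Real.volume_Icc_pi]
  have hint (k : ι → ℤ) : IntegrableOn (fun x : κ → ℝ ↦
      (∏ i, c i (k i)) * (𝐞 ((fun j ↦ ((k ᵥ* A) j : ℝ)) ⬝ᵥ x) : ℂ)) (Set.Icc 0 1) :=
    (by fun_prop : Continuous _).continuousOn.integrableOn_compact isCompact_Icc
  simp_rw [prod_tsum_fourierChar_mulVec A hc]
  rw [← integral_tsum_of_summable_integral_norm hint
    (by simpa only [norm_mul, Circle.norm_coe, mul_one, setIntegral_const, hvol, one_smul]
      using summable_norm_pi_prod hc),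
    tsum_subtype {k : ι → ℤ | k ᵥ* A = 0} fun k ↦ ∏ i, c i (k i)]
  refine tsum_congr fun k ↦ ?_
  simp only [integral_const_mul, setIntegral_fourierChar_intCast_dotProduct, mul_ite, mul_one,
    mul_zero, Set.indicator_apply, Set.mem_ofPred_eq]

end Torus

section Permutation

variable {ι α β : Type*}

lemma apply_eq_of_sameCycle_s2 {π : Equiv.Perm ι} {k : ι → α} (hk : k ∘ π = k) {i j : ι}
    (h : π.SameCycle i j) : k i = k j := by
  have hpow (n : ℕ) (a : ι) : k ((π ^ n) a) = k a := by
    rw [← iterate_eq_pow]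
    exact congrFun (iterate_invariant hk n) a
  obtain ⟨n | n, rfl⟩ := h
  · exact (hpow n i).symm
  · simpa using hpow (n + 1) ((π ^ (n + 1))⁻¹ i)

lemma setOf_comp_perm_eq_self {π : Equiv.Perm ι} {q : ι → β} (hq : Surjective q)
    (hπ : ∀ i j, q i = q j ↔ π.SameCycle i j) :
    {k : ι → α | k ∘ π = k} = Set.range fun g : β → α ↦ g ∘ q := by
  refine Set.Subset.antisymm (fun k hk ↦ ⟨k ∘ surjInv hq, funext fun i ↦ ?_⟩) ?_
  · exact apply_eq_of_sameCycle_s2 hk ((hπ _ _).1 (surjInv_eq hq (q i)))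
  · rintro _ ⟨g, rfl⟩
    exact funext fun i ↦ congrArg g ((hπ _ _).2 (sameCycle_apply_left.2 .rfl))

variable [Fintype ι]

lemma permMatrix_sub_mulVec [DecidableEq ι] {R : Type*} [CommRing R] (σ τ : Equiv.Perm ι)
    (x : ι → R) (i : ι) :
    ((σ.permMatrix ℤ - τ.permMatrix ℤ).map (↑) *ᵥ x) i = x (σ i) - x (τ i) := by
  have hcast (ρ : Equiv.Perm ι) : (ρ.permMatrix ℤ).map (Int.cast : ℤ → R) = ρ.permMatrix R :=
    PEquiv.map_toMatrix (Int.castRingHom R) ρ.toPEquiv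
  rw [Matrix.map_sub _ Int.cast_sub, hcast, hcast, sub_mulVec, permMatrix_mulVec,
    permMatrix_mulVec]
  rfl

lemma vecMul_permMatrix_sub_eq_zero_iff [DecidableEq ι] {R : Type*} [CommRing R]
    {σ τ : Equiv.Perm ι} {k : ι → R} :
    k ᵥ* (σ.permMatrix R - τ.permMatrix R) = 0 ↔ k ∘ (τ⁻¹ * σ) = k := by
  rw [vecMul_sub, vecMul_permMatrix, vecMul_permMatrix, sub_eq_zero, σ.comp_symm_eq, eq_comm]
  rfl

theorem stmt2_general [Fintype β] [DecidableEq β] (σ τ : Equiv.Perm ι) {q : ι → β}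
    (hq : Surjective q) (hcycle : ∀ i j, q i = q j ↔ (τ⁻¹ * σ).SameCycle i j) {c : ι → ℤ → ℂ}
    (hc : ∀ i, Summable fun ℓ ↦ ‖c i ℓ‖) {f : ι → ℝ → ℂ}
    (hf : ∀ i t, f i t = ∑' ℓ : ℤ, c i ℓ * Complex.exp (2 * Real.pi * Complex.I * ℓ * t)) :
    ∫ x in Set.Icc (0 : ι → ℝ) 1, ∏ i, f i (x (σ i) - x (τ i)) =
      ∏ b, ∑' ℓ, ∏ i with q i = b, c i ℓ := by
  classical
  have hkernel : {k : ι → ℤ | k ᵥ* (σ.permMatrix ℤ - τ.permMatrix ℤ) = 0} =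
      Set.range fun g : β → ℤ ↦ g ∘ q := by
    simp_rw [vecMul_permMatrix_sub_eq_zero_iff, setOf_comp_perm_eq_self hq hcycle]
  simp_rw [hf, ← fourierChar_intCast_mul, ← permMatrix_sub_mulVec σ τ]
  rw [setIntegral_prod_tsum_fourierChar_mulVec _ hc, hkernel,
    tsum_range (fun k : ι → ℤ ↦ ∏ i, c i (k i)) hq.injective_comp_right]
  exact tsum_prod_comp_eq_prod_tsum hq hc

end Permutation

section Parity

lemma subRight_inv_mul_addRight {G : Type*} [AddGroup G] (a b : G) :
    ((Equiv.subRight a)⁻¹ * Equiv.addRight b : Equiv.Perm G) = Equiv.addRight (b + a) :=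
  Equiv.ext fun x ↦ add_assoc x b a

variable {L : ℕ}

lemma even_val_add_iff (hL : Even L) (i j : Fin L) :
    Even (i + j).val ↔ (Even i.val ↔ Even j.val) := by
  rw [Fin.val_add, hL.mod_even_iff, Nat.even_add]

variable [NeZero L]

open scoped Fin.CommRing in
lemma fin_val_nsmul_one (i : Fin L) : i.val • (1 : Fin L) = i := by
  rw [nsmul_one, Fin.cast_val_eq_self]

lemma sameCycle_addRight_one_add_one_iff (hL : Even L) {i j : Fin L} :
    (Equiv.addRight (1 + 1) : Equiv.Perm (Fin L)).SameCycle i j ↔ (Even i.val ↔ Even j.val) := by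
  constructor
  · intro h
    have hinvariant : (fun a : Fin L ↦ Even a.val) ∘ Equiv.addRight (1 + 1) =
        fun a ↦ Even a.val := by
      funext a
      simp [even_val_add_iff hL]
    exact iff_of_eq (apply_eq_of_sameCycle_s2 hinvariant h)
  · intro h
    have hdiff : Even (j - i).val := by
      have hsum := even_val_add_iff hL (j - i) i
      rw [sub_add_cancel] at hsum
      tauto
    obtain ⟨n, hn⟩ := hdiff
    refine ⟨n, ?_⟩
    rw [zpow_natCast, ← iterate_eq_pow, Equiv.coe_addRight, add_right_iterate, nsmul_add,
      ← add_nsmul, ← hn, fin_val_nsmul_one]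
    exact add_sub_cancel i j

lemma decide_even_val_eq_iff_sameCycle (hL : Even L) (i j : Fin L) :
    decide (Even i.val) = decide (Even j.val) ↔
      ((Equiv.subRight 1)⁻¹ * Equiv.addRight 1 : Equiv.Perm (Fin L)).SameCycle i j := by
  rw [decide_eq_decide, subRight_inv_mul_addRight, sameCycle_addRight_one_add_one_iff hL]

lemma decide_even_val_surjective (hL : Even L) :
    Surjective fun i : Fin L ↦ decide (Even i.val) := by
  intro b
  cases b
  · exact ⟨1, by simpa using odd_one.mod_even hL⟩
  · exact ⟨0, by simp⟩

end Parity

theorem stmt2 (L : ℕ) [NeZero L] (heven : Even L) (f : Fin L → ℝ → ℂ)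
    (hcont : ∀ i, Continuous (f i))
    (hper : ∀ i (x : ℝ), f i (x + 1) = f i x)
    (habs : ∀ i, Summable fun ℓ : ℤ => ‖fourierCoeffR (f i) ℓ‖)
    (hrep : ∀ i (x : ℝ),
      f i x = ∑' ℓ : ℤ, fourierCoeffR (f i) ℓ * Complex.exp (2 * Real.pi * Complex.I * ℓ * x)) :
    (∫ x in Set.Icc (0 : Fin L → ℝ) 1, ∏ i, f i (x (i + 1) - x (i - 1))) =
      (∑' ℓ : ℤ, ∏ i ∈ Finset.univ.filter (fun i : Fin L => Even i.val),
          fourierCoeffR (f i) ℓ) *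
      (∑' ℓ : ℤ, ∏ i ∈ Finset.univ.filter (fun i : Fin L => Odd i.val),
          fourierCoeffR (f i) ℓ) := by
  simpa using stmt2_general (Equiv.addRight 1) (Equiv.subRight 1)
    (decide_even_val_surjective heven) (decide_even_val_eq_iff_sameCycle heven) habs hrep
end

section
/- Let L ≥ 1 be odd and let f_{i,j} : ℝ → ℂ (for 0 ≤ i, j ≤ L−1) be continuous 1-periodic functions, each with an absolutely convergent Fourier series. For integration variables x^a_{i,j}, x^b_{i,j} with indices modulo L, set ξ_{i,j}(x^a,x^b) = x^a_{i,j} + x^a_{i+1,j} + x^b_{i+1,j} + x^b_{i+1,j+1} − x^a_{i+1,j+1} − x^a_{i,j+1} − x^b_{i,j+1} − x^b_{i,j}. Then ∫_{[0,1]^{L²}} ∫_{[0,1]^{L²}} ∏_{i=0}^{L−1} ∏_{j=0}^{L−1} f_{i,j}(ξ_{i,j}(x^a,x^b)) dx^a dx^b = ∑_{ℓ∈ℤ} ∏_{i=0}^{L−1} ∏_{j=0}^{L−1} f̂_{i,j}(ℓ). -/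
open MeasureTheory

/-!
Expanding every factor into its Fourier series turns the integrand into a sum over all labellings
`l` of the plaquettes by integers. Summation by parts rewrites the phase `∑ l · ξ` as a linear form
in the link variables with integer coefficients, so integrating over the unit cube keeps exactly
the labellings for which all these coefficients vanish. The sum and the difference of the two
coefficients at each site show that these are the labellings with periods `s + t` and `s - t`,
where `s` and `t` are the two lattice steps. On a torus with odd side, `2 • s = (s + t) + (s - t)`
has `s` among its multiples, so such labellings are constant.
-/

section ProductOfSeries

variable {ι κ R : Type*} [Fintype ι] [NormedCommRing R]

lemma summable_norm_prod_pi_s4 (f : ι → κ → R) (hf : ∀ i, Summable fun k => ‖f i k‖) :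
    Summable fun k : ι → κ => ‖∏ i, f i (k i)‖ := by
  revert f hf
  apply @Fintype.induction_empty_option fun ι _ => ∀ f : ι → κ → R,
    (∀ i, Summable fun k => ‖f i k‖) → Summable fun k : ι → κ => ‖∏ i, f i (k i)‖
  · intro α β _ e ih f hf
    let _ := Fintype.ofEquiv β e.symm
    rw [← (e.arrowCongr (.refl κ)).summable_iff]
    simpa [Function.comp_def, ← e.prod_comp] using ih _ fun i => hf (e i)
  · exact fun _ _ => .of_finite
  · intro α _ ih f hf
    rw [← (Equiv.piOptionEquivProd (β := fun _ => κ)).symm.summable_iff]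
    simpa [Function.comp_def, Fintype.prod_option] using
      (hf none).mul_norm (ih _ fun i => hf (some i))

lemma prod_tsum_eq_tsum_prod_pi_s4 [CompleteSpace R] (f : ι → κ → R)
    (hf : ∀ i, Summable fun k => ‖f i k‖) :
    ∏ i, ∑' k, f i k = ∑' k : ι → κ, ∏ i, f i (k i) := by
  revert f hf
  apply @Fintype.induction_empty_option fun ι _ => ∀ f : ι → κ → R,
    (∀ i, Summable fun k => ‖f i k‖) → ∏ i, ∑' k, f i k = ∑' k : ι → κ, ∏ i, f i (k i)
  · intro α β _ e ih f hf
    let _ := Fintype.ofEquiv β e.symm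
    rw [← (e.arrowCongr (.refl κ)).tsum_eq, ← e.prod_comp, ih _ fun i => hf (e i)]
    simp [← e.prod_comp]
  · simp
  · intro α _ ih f hf
    rw [Fintype.prod_option, ih _ fun i => hf (some i), tsum_mul_tsum_of_summable_norm (hf none)
      (summable_norm_prod_pi_s4 _ fun i => hf (some i)),
      ← (Equiv.piOptionEquivProd (β := fun _ => κ)).symm.tsum_eq]
    simp [Fintype.prod_option]

end ProductOfSeries

section Phase

/-- The phase `e^{2πix}`. -/
noncomputable def phase (x : ℝ) : ℂ :=
  Complex.exp (2 * Real.pi * Complex.I * x)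

lemma phase_add (x y : ℝ) : phase (x + y) = phase x * phase y := by
  simp [phase, mul_add, Complex.exp_add]

lemma phase_sum {ι : Type*} [Fintype ι] (x : ι → ℝ) : phase (∑ i, x i) = ∏ i, phase (x i) := by
  simp [phase, Finset.mul_sum, Complex.exp_sum]

lemma phase_intCast_mul (n : ℤ) (x : ℝ) :
    phase (n * x) = Complex.exp (2 * Real.pi * Complex.I * n * x) := by
  simp [phase, mul_assoc]

@[simp]
lemma norm_phase (x : ℝ) : ‖phase x‖ = 1 := by
  simpa [phase, mul_right_comm] using Complex.norm_exp_ofReal_mul_I (2 * Real.pi * x)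

@[fun_prop]
lemma continuous_phase : Continuous phase := by
  unfold phase
  fun_prop

end Phase

section UnitCube

lemma restrict_Icc_pi {ι : Type*} [Fintype ι] {E : ι → Type*} [∀ i, MeasureSpace (E i)]
    [∀ i, SigmaFinite (volume : Measure (E i))] [∀ i, Preorder (E i)] (a b : ∀ i, E i) :
    (volume : Measure (∀ i, E i)).restrict (Set.Icc a b) =
      Measure.pi fun i => volume.restrict (Set.Icc (a i) (b i)) := by
  rw [← Set.pi_univ_Icc, volume_pi, Measure.restrict_pi_pi]

variable {ι : Type*} [Fintype ι]

lemma integral_Icc_phase_intCast_mul (n : ℤ) :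
    ∫ x in Set.Icc (0 : ℝ) 1, phase (n * x) = if n = 0 then 1 else 0 := by
  rw [integral_Icc_eq_integral_Ioc, ← intervalIntegral.integral_of_le zero_le_one]
  simp_rw [phase_intCast_mul]
  split_ifs with hn
  · simp [hn]
  · have hc : (2 * Real.pi * Complex.I * n : ℂ) ≠ 0 := by simp [hn, Real.pi_ne_zero]
    have hexp : Complex.exp (2 * Real.pi * Complex.I * n) = 1 :=
      Complex.exp_eq_one_iff.2 ⟨n, by ring⟩
    simp [integral_exp_mul_complex hc, hexp]

lemma integral_Icc_pi_phase_sum_intCast_mul (n : ι → ℤ) :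
    ∫ x in Set.Icc (0 : ι → ℝ) 1, phase (∑ i, n i * x i) = if n = 0 then 1 else 0 := by
  simp_rw [phase_sum]
  rw [restrict_Icc_pi, integral_fintype_prod_eq_prod fun i t => phase (n i * t)]
  simp [integral_Icc_phase_intCast_mul, funext_iff, Finset.prod_ite_zero]

variable {κ : Type*} [Fintype κ]

lemma map_curry_restrict_Icc_zero_one :
    (volume.restrict (Set.Icc (0 : ι × κ → ℝ) 1)).map (MeasurableEquiv.curry ι κ ℝ) =
      volume.restrict (Set.Icc 0 1) := by
  have hprob : IsProbabilityMeasure ((volume : Measure ℝ).restrict (Set.Icc 0 1)) := ⟨by simp⟩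
  simp only [restrict_Icc_pi, Pi.zero_apply, Pi.one_apply, ← Measure.infinitePi_eq_pi]
  exact Measure.infinitePi_map_curry fun _ _ => volume.restrict (Set.Icc 0 1)

variable {E : Type*} [NormedAddCommGroup E] [NormedSpace ℝ E]

lemma integral_Icc_zero_one_uncurry (F : (ι × κ → ℝ) → E) :
    ∫ x in Set.Icc 0 1, F x = ∫ x in Set.Icc (0 : ι → κ → ℝ) 1, F (Function.uncurry x) := by
  rw [← map_curry_restrict_Icc_zero_one, integral_map_equiv]
  rfl

lemma setIntegral_Icc_zero_one_prod {F : (ι → ℝ) × (κ → ℝ) → E} (hF : Continuous F) :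
    ∫ x in Set.Icc 0 1, F x =
      ∫ xa in Set.Icc (0 : ι → ℝ) 1, ∫ xb in Set.Icc (0 : κ → ℝ) 1, F (xa, xb) := by
  rw [Set.Icc_prod_eq, Measure.volume_eq_prod, setIntegral_prod]
  · rfl
  · exact hF.continuousOn.integrableOn_compact (isCompact_Icc.prod isCompact_Icc)

end UnitCube

section TrigSeries

/-- The sum of the trigonometric series with coefficients `c`, meaningful when the series converges;
the coefficients are the Fourier coefficients of the sum when `c` is absolutely summable. -/
noncomputable def trigSeries (c : ℤ → ℂ) (x : ℝ) : ℂ :=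
  ∑' ℓ : ℤ, c ℓ * Complex.exp (2 * Real.pi * Complex.I * ℓ * x)

lemma trigSeries_eq_tsum_phase (c : ℤ → ℂ) (x : ℝ) :
    trigSeries c x = ∑' ℓ : ℤ, c ℓ * phase (ℓ * x) := by
  simp_rw [phase_intCast_mul, trigSeries]

lemma continuous_trigSeries {c : ℤ → ℂ} (hc : Summable fun ℓ => ‖c ℓ‖) :
    Continuous (trigSeries c) := by
  simp_rw [funext (trigSeries_eq_tsum_phase c)]
  refine continuous_tsum (fun ℓ => ?_) hc fun ℓ x => by simp
  fun_prop

variable {ι α : Type*} [Fintype ι] {c : ι → ℤ → ℂ}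

lemma prod_trigSeries (hc : ∀ i, Summable fun ℓ => ‖c i ℓ‖) (x : ι → ℝ) :
    ∏ i, trigSeries (c i) (x i) =
      ∑' l : ι → ℤ, (∏ i, c i (l i)) * phase (∑ i, l i * x i) := by
  simp_rw [trigSeries_eq_tsum_phase]
  rw [prod_tsum_eq_tsum_prod_pi_s4 _ fun i => by simpa using hc i]
  simp_rw [Finset.prod_mul_distrib, phase_sum]

lemma integral_prod_trigSeries [MeasurableSpace α] {μ : Measure α} [IsFiniteMeasure μ]
    (hc : ∀ i, Summable fun ℓ => ‖c i ℓ‖) {x : ι → α → ℝ} (hx : ∀ i, AEMeasurable (x i) μ) :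
    ∫ a, ∏ i, trigSeries (c i) (x i a) ∂μ =
      ∑' l : ι → ℤ, (∏ i, c i (l i)) * ∫ a, phase (∑ i, l i * x i a) ∂μ := by
  simp_rw [prod_trigSeries hc, ← integral_const_mul]
  refine (integral_tsum_of_summable_integral_norm (fun l => ?_) ?_).symm
  · have hmeas : AEStronglyMeasurable (fun a => phase (∑ i, l i * x i a)) μ :=
      (continuous_phase.measurable.comp_aemeasurable (by fun_prop)).aestronglyMeasurable
    exact (Integrable.of_bound hmeas 1 (.of_forall fun a => by simp)).const_mul _
  · simpa using (summable_norm_prod_pi_s4 c hc).mul_left (μ.real Set.univ)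

end TrigSeries

section LoopAngle

variable {G : Type*} [AddCommGroup G] (s t : G)

/-- The argument `ξ_g(xa, xb)` of the Wilson loop integrand at the site `g` of a lattice `G` with
steps `s` and `t`; on `Fin L × Fin L`, the steps `(1, 0)` and `(0, 1)` give the paper's
`ξ_{i,j}`. -/
def loopAngle {R : Type*} [AddCommGroup R] (xa xb : G → R) (g : G) : R :=
  xa g + xa (g + s) + xb (g + s) + xb (g + s + t) - xa (g + s + t) - xa (g + t) - xb (g + t) - xb g

/-- The coefficient of `xa g` in `∑ h, l h * loopAngle s t xa xb h`. -/
def loopCoeffA (l : G → ℤ) (g : G) : ℤ :=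
  l g + l (g - s) - l (g - (s + t)) - l (g - t)

/-- The coefficient of `xb g` in `∑ h, l h * loopAngle s t xa xb h`. -/
def loopCoeffB (l : G → ℤ) (g : G) : ℤ :=
  l (g - s) + l (g - (s + t)) - l (g - t) - l g

lemma continuous_loopAngle {R : Type*} [AddCommGroup R] [TopologicalSpace R]
    [IsTopologicalAddGroup R] (g : G) :
    Continuous fun x : (G → R) × (G → R) => loopAngle s t x.1 x.2 g := by
  unfold loopAngle
  fun_prop

lemma sum_mul_comp_add [Fintype G] {R : Type*} [NonUnitalNonAssocSemiring R] (l x : G → R) (h : G) :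
    ∑ g, l g * x (g + h) = ∑ g, l (g - h) * x g := by
  simpa using Equiv.sum_comp (Equiv.addRight h) fun g => l (g - h) * x g

lemma sum_intCast_mul_loopAngle [Fintype G] {R : Type*} [Ring R] (l : G → ℤ) (xa xb : G → R) :
    ∑ g, (l g : R) * loopAngle s t xa xb g =
      ∑ g, (loopCoeffA s t l g : R) * xa g + ∑ g, (loopCoeffB s t l g : R) * xb g := by
  simp only [loopAngle, loopCoeffA, loopCoeffB, add_assoc _ s t, mul_add, mul_sub, Int.cast_add,
    Int.cast_sub, add_mul, sub_mul, Finset.sum_add_distrib, Finset.sum_sub_distrib,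
    sum_mul_comp_add (fun g => (l g : R))]
  abel

variable {s t}

lemma loopCoeffs_eq_zero_iff_periodic {l : G → ℤ} :
    loopCoeffA s t l = 0 ∧ loopCoeffB s t l = 0 ↔
      Function.Periodic l (s + t) ∧ Function.Periodic l (s - t) := by
  constructor
  · rintro ⟨hA, hB⟩
    refine ⟨fun g => ?_, fun g => ?_⟩
    · have hA' := congrFun hA (g + (s + t))
      have hB' := congrFun hB (g + (s + t))
      simp only [loopCoeffA, loopCoeffB, Pi.zero_apply, add_sub_cancel_right] at hA' hB'
      lia
    · have hA' := congrFun hA (g + s)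
      have hB' := congrFun hB (g + s)
      simp only [loopCoeffA, loopCoeffB, Pi.zero_apply, add_sub_cancel_right, add_sub_assoc]
        at hA' hB'
      lia
  · rintro ⟨hadd, hsub⟩
    have hst (g : G) : l (g - t) = l (g - s) := by
      simpa using hsub (g - s)
    constructor <;> ext g <;> simp [loopCoeffA, loopCoeffB, hadd.sub_eq, hst]

lemma eq_apply_zero_of_periodic_of_closure_eq_top {β : Type*} {l : G → β} {S : Set G}
    (hS : AddSubgroup.closure S = ⊤) (hl : ∀ p ∈ S, Function.Periodic l p) (g : G) : l g = l 0 := by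
  have hg : g ∈ AddSubgroup.closure S := hS ▸ AddSubgroup.mem_top g
  suffices Function.Periodic l g from this.eq
  induction hg using AddSubgroup.closure_induction with
  | mem p hp => exact hl p hp
  | zero => exact Function.periodic_with_period_zero l
  | add p q _ _ hp hq => exact hp.add_period hq
  | neg p _ hp => exact hp.neg

lemma loopCoeffs_eq_zero_iff_mem_range_const (hst : AddSubgroup.closure {s + t, s - t} = ⊤)
    {l : G → ℤ} :
    loopCoeffA s t l = 0 ∧ loopCoeffB s t l = 0 ↔ l ∈ Set.range (Function.const G) := by
  rw [loopCoeffs_eq_zero_iff_periodic]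
  constructor
  · rintro ⟨hadd, hsub⟩
    have hl : ∀ p ∈ ({s + t, s - t} : Set G), Function.Periodic l p := by
      rintro _ (rfl | rfl) <;> assumption
    exact ⟨l 0, funext fun g => (eq_apply_zero_of_periodic_of_closure_eq_top hst hl g).symm⟩
  · rintro ⟨n, rfl⟩
    exact ⟨fun _ => rfl, fun _ => rfl⟩

lemma closure_pair_add_sub_eq_top (hs : Odd (addOrderOf s))
    (hst : AddSubgroup.closure {s, t} = ⊤) : AddSubgroup.closure {s + t, s - t} = ⊤ := by
  set H := AddSubgroup.closure {s + t, s - t}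
  have hadd : s + t ∈ H := AddSubgroup.subset_closure (by simp)
  have hsub : s - t ∈ H := AddSubgroup.subset_closure (by simp)
  have hsH : s ∈ H := by
    obtain ⟨m, hm⟩ := exists_nsmul_eq_self_of_coprime (Nat.coprime_two_left.2 hs)
    have h2s : 2 • s ∈ H := by simpa [two_nsmul] using H.add_mem hadd hsub
    exact hm ▸ H.nsmul_mem h2s m
  have htH : t ∈ H := by simpa using H.sub_mem hadd hsH
  rw [eq_top_iff, ← hst, AddSubgroup.closure_le]
  rintro _ (rfl | rfl)
  exacts [hsH, htH]

end LoopAngle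

section LoopIntegral

variable {G : Type*} [AddCommGroup G] [Fintype G] {s t : G}

lemma integral_Icc_phase_sum_mul_loopAngle (l : G → ℤ) :
    ∫ x in Set.Icc (0 : (G → ℝ) × (G → ℝ)) 1, phase (∑ g, l g * loopAngle s t x.1 x.2 g) =
      if loopCoeffA s t l = 0 ∧ loopCoeffB s t l = 0 then 1 else 0 := by
  simp_rw [sum_intCast_mul_loopAngle, phase_add]
  rw [Set.Icc_prod_eq, Measure.volume_eq_prod,
    setIntegral_prod_mul (fun xa : G → ℝ => phase (∑ g, loopCoeffA s t l g * xa g))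
      fun xb : G → ℝ => phase (∑ g, loopCoeffB s t l g * xb g)]
  simp_rw [Prod.fst_zero, Prod.snd_zero, Prod.fst_one, Prod.snd_one,
    integral_Icc_pi_phase_sum_intCast_mul, ite_zero_mul_ite_zero, mul_one]

theorem stmt4_general (hst : AddSubgroup.closure {s + t, s - t} = ⊤) {f : G → ℝ → ℂ}
    {c : G → ℤ → ℂ} (hc : ∀ g, Summable fun ℓ => ‖c g ℓ‖) (hf : ∀ g, f g = trigSeries (c g)) :
    ∫ xa in Set.Icc (0 : G → ℝ) 1, ∫ xb in Set.Icc (0 : G → ℝ) 1,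
        ∏ g, f g (loopAngle s t xa xb g) =
      ∑' ℓ : ℤ, ∏ g, c g ℓ := by
  have hcont : Continuous fun x : (G → ℝ) × (G → ℝ) =>
      ∏ g, trigSeries (c g) (loopAngle s t x.1 x.2 g) :=
    continuous_finsetProd _ fun g _ =>
      (continuous_trigSeries (hc g)).comp (continuous_loopAngle s t g)
  have hfin : IsFiniteMeasure
      ((volume : Measure ((G → ℝ) × (G → ℝ))).restrict (Set.Icc 0 1)) :=
    ⟨by simpa using isCompact_Icc.measure_lt_top⟩
  simp_rw [hf]
  rw [← setIntegral_Icc_zero_one_prod hcont,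
    integral_prod_trigSeries hc fun g => (continuous_loopAngle s t g).aemeasurable]
  classical
  simp_rw [integral_Icc_phase_sum_mul_loopAngle, loopCoeffs_eq_zero_iff_mem_range_const hst]
  rw [← (Function.const_injective (α := G)).tsum_eq]
  · simp
  · exact fun l hl => (ite_ne_right_iff.1 (right_ne_zero_of_mul hl)).1

end LoopIntegral

open scoped Fin.NatCast in
lemma closure_pair_fin_prod_fin_eq_top (L M : ℕ) [NeZero L] [NeZero M] :
    AddSubgroup.closure {((1 : Fin L), (0 : Fin M)), (0, 1)} = ⊤ := by
  rw [eq_top_iff]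
  rintro ⟨i, j⟩ -
  have hij : (i, j) = i.val • ((1 : Fin L), (0 : Fin M)) + j.val • (0, 1) := by simp
  rw [hij]
  exact add_mem (nsmul_mem (AddSubgroup.subset_closure (by simp)) _)
    (nsmul_mem (AddSubgroup.subset_closure (by simp)) _)

lemma odd_addOrderOf_one_zero {L M : ℕ} [NeZero L] [NeZero M] (hL : Odd L) :
    Odd (addOrderOf ((1 : Fin L), (0 : Fin M))) := by
  refine hL.of_dvd_nat (addOrderOf_dvd_of_nsmul_eq_zero ?_)
  simpa using card_nsmul_eq_zero (x := (1 : Fin L))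

theorem stmt4 (L : ℕ) [NeZero L] (hodd : Odd L) (f : Fin L → Fin L → ℝ → ℂ)
    (hcont : ∀ i j, Continuous (f i j))
    (hper : ∀ i j (x : ℝ), f i j (x + 1) = f i j x)
    (habs : ∀ i j, Summable fun ℓ : ℤ => ‖fourierCoeffR (f i j) ℓ‖)
    (hrep : ∀ i j (x : ℝ),
      f i j x = ∑' ℓ : ℤ, fourierCoeffR (f i j) ℓ *
        Complex.exp (2 * Real.pi * Complex.I * ℓ * x)) :
    (∫ xa in Set.Icc (0 : Fin L → Fin L → ℝ) 1,
      ∫ xb in Set.Icc (0 : Fin L → Fin L → ℝ) 1,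
        ∏ i, ∏ j, f i j
          (xa i j + xa (i + 1) j + xb (i + 1) j + xb (i + 1) (j + 1)
            - xa (i + 1) (j + 1) - xa i (j + 1) - xb i (j + 1) - xb i j)) =
      ∑' ℓ : ℤ, ∏ i, ∏ j, fourierCoeffR (f i j) ℓ := by
  have hgen := closure_pair_add_sub_eq_top (odd_addOrderOf_one_zero (M := L) hodd)
    (closure_pair_fin_prod_fin_eq_top L L)
  simpa [integral_Icc_zero_one_uncurry, Fintype.prod_prod_type, loopAngle] using
    stmt4_general hgen (c := fun g => fourierCoeffR (f g.1 g.2)) (fun g => habs g.1 g.2)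
      fun g => funext (hrep g.1 g.2)
end

section
/- Let L ≥ 1 and let f_{i,j,k} : ℝ → ℂ (for 0 ≤ i, j, k ≤ L−1) be continuous 1-periodic functions, each with an absolutely convergent Fourier series. Consider integration variables x^a_{i,j,k}, x^b_{i,j,k}, x^c_{i,j,k} with all indices modulo L. Then ∫_{[0,1]^{3L³}} ∏_{i,j,k=0}^{L−1} [ f_{i,j,k}(x^a_{i,j,k} − x^a_{i,j+1,k} − x^b_{i,j,k} + x^b_{i+1,j,k}) · f_{i,j,k}(x^c_{i,j,k} − x^c_{i+1,j,k} − x^a_{i,j,k} + x^a_{i,j,k+1}) · f_{i,j,k}(x^b_{i,j,k} − x^b_{i,j,k+1} − x^c_{i,j,k} + x^c_{i,j+1,k}) ] dx = ∑_{(h^a,h^b,h^c)∈𝓗} ∏_{i,j,k=0}^{L−1} f̂_{i,j,k}(h^a_{i,j,k}) f̂_{i,j,k}(h^b_{i,j,k}) f̂_{i,j,k}(h^c_{i,j,k}), where 𝓗 ⊂ ℤ^{3L³} is the set of all triples of integer arrays (h^a, h^b, h^c) indexed by (i,j,k) modulo L satisfying, for all i, j, k: h^c_{i,j,k} − h^c_{i,j−1,k}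 − h^b_{i,j,k} + h^b_{i,j,k−1} = 0, h^a_{i,j,k} − h^a_{i,j,k−1} − h^c_{i,j,k} + h^c_{i−1,j,k} = 0, and h^b_{i,j,k} − h^b_{i−1,j,k} − h^a_{i,j,k} + h^a_{i,j−1,k} = 0. Here, at each site (i,j,k), h^c_{i,j,k} is paired with the first factor, h^b_{i,j,k} with the second, and h^a_{i,j,k} with the third. -/
open MeasureTheory

/-!
Expand every factor into its Fourier series. The product of these absolutely convergent series is
an absolutely convergent sum over integer arrays `h` on plaquettes, so it may be integrated term by
term; the term of `h` is a constant times the integral of the character with phase `∑ h · curl x`.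
Summation by parts on the periodic lattice rewrites this phase as `∑ (curl* h) · x`, and by
orthogonality of characters the integral is `1` if `curl* h = 0` and `0` otherwise.
-/

open Filter
open scoped FourierTransform Topology

section ProdTsum

variable {ι R : Type*} {κ : ι → Type*} [Fintype ι] [NormedCommRing R] [NormOneClass R]
  {f : ∀ i, κ i → R}

theorem summable_norm_prod_of_summable_norm (hf : ∀ i, Summable fun a => ‖f i a‖) :
    Summable fun h : ∀ i, κ i => ‖∏ i, f i (h i)‖ := by
  classical
  refine summable_of_sum_le (c := ∏ i, ∑' a, ‖f i a‖) (fun _ => norm_nonneg _) fun s => ?_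
  have hs : s ⊆ Fintype.piFinset fun i => s.image (· i) := fun h hh =>
    Fintype.mem_piFinset.mpr fun i => Finset.mem_image_of_mem (· i) hh
  calc ∑ h ∈ s, ‖∏ i, f i (h i)‖
      ≤ ∑ h ∈ s, ∏ i, ‖f i (h i)‖ := Finset.sum_le_sum fun h _ => Finset.norm_prod_le _ _
    _ ≤ ∑ h ∈ Fintype.piFinset fun i => s.image (· i), ∏ i, ‖f i (h i)‖ :=
        Finset.sum_le_sum_of_subset_of_nonneg hs fun _ _ _ => by positivity
    _ = ∏ i, ∑ a ∈ s.image (· i), ‖f i a‖ := (Finset.prod_univ_sum _ fun i a => ‖f i a‖).symm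
    _ ≤ ∏ i, ∑' a, ‖f i a‖ := by
        gcongr with i
        exact (hf i).sum_le_tsum _ fun _ _ => norm_nonneg _

theorem prod_tsum_of_summable_norm [CompleteSpace R] (hf : ∀ i, Summable fun a => ‖f i a‖) :
    ∏ i, ∑' a, f i a = ∑' h : ∀ i, κ i, ∏ i, f i (h i) := by
  classical
  have hbox : Tendsto (fun t : ∀ i, Finset (κ i) => Fintype.piFinset t) atTop atTop :=
    tendsto_atTop_finset_of_monotone (fun t u htu => Fintype.piFinset_subset t u htu)
      fun h => ⟨fun i => {h i}, by simp⟩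
  have heval (i : ι) : Tendsto (fun t : ∀ i, Finset (κ i) => t i) atTop atTop :=
    (Function.monotone_eval i).tendsto_atTop_finset fun a => ⟨Function.update ⊥ i {a}, by simp⟩
  have hprod : Tendsto (fun t : ∀ i, Finset (κ i) => ∏ i, ∑ a ∈ t i, f i a) atTop
      (𝓝 (∏ i, ∑' a, f i a)) :=
    tendsto_finsetProd _ fun i _ => (hf i).of_norm.hasSum.comp (heval i)
  refine tendsto_nhds_unique hprod ?_
  simp only [Finset.prod_univ_sum]
  exact (summable_norm_prod_of_summable_norm hf).of_norm.hasSum.comp hbox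

end ProdTsum

section TrigonometricSeries

variable {κ : Type*} [Fintype κ] {c : κ → ℤ → ℂ}

theorem prod_fourierChar_eq_fourierChar_sum (t : κ → ℝ) :
    ∏ k, (𝐞 (t k) : ℂ) = 𝐞 (∑ k, t k) := by
  simp only [Real.fourierChar_apply, ← Complex.exp_sum, ← Finset.sum_mul, Finset.mul_sum,
    Complex.ofReal_sum]

theorem prod_tsum_mul_fourierChar (hc : ∀ k, Summable fun ℓ => ‖c k ℓ‖) (y : κ → ℝ) :
    ∏ k, ∑' ℓ : ℤ, c k ℓ * 𝐞 (ℓ * y k) =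
      ∑' h : κ → ℤ, (∏ k, c k (h k)) * 𝐞 (∑ k, h k * y k) := by
  rw [prod_tsum_of_summable_norm (by simpa only [norm_mul, Circle.norm_coe, mul_one] using hc)]
  simp only [Finset.prod_mul_distrib, prod_fourierChar_eq_fourierChar_sum]

theorem integral_prod_tsum_mul_fourierChar {X : Type*} [MeasurableSpace X] {μ : Measure X}
    [IsFiniteMeasure μ] (hc : ∀ k, Summable fun ℓ => ‖c k ℓ‖) {θ : X → κ → ℝ}
    (hθ : AEMeasurable θ μ) :
    ∫ x, ∏ k, ∑' ℓ : ℤ, c k ℓ * 𝐞 (ℓ * θ x k) ∂μ =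
      ∑' h : κ → ℤ, (∏ k, c k (h k)) * ∫ x, (𝐞 (∑ k, h k * θ x k) : ℂ) ∂μ := by
  have hnorm (h : κ → ℤ) (x : X) :
      ‖(∏ k, c k (h k)) * (𝐞 (∑ k, h k * θ x k) : ℂ)‖ = ‖∏ k, c k (h k)‖ := by
    rw [norm_mul, Circle.norm_coe, mul_one]
  have hmeas (h : κ → ℤ) :
      AEStronglyMeasurable (fun x => (∏ k, c k (h k)) * (𝐞 (∑ k, h k * θ x k) : ℂ)) μ := by
    have hcont : Continuous fun y : κ → ℝ => (∏ k, c k (h k)) * (𝐞 (∑ k, h k * y k) : ℂ) := by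
      fun_prop
    exact hcont.comp_aestronglyMeasurable hθ.aestronglyMeasurable
  simp only [prod_tsum_mul_fourierChar hc, ← integral_const_mul]
  refine (integral_tsum_of_summable_integral_norm
    (fun h => .of_bound (hmeas h) _ (ae_of_all _ fun x => (hnorm h x).le)) ?_).symm
  simpa only [hnorm, integral_const, smul_eq_mul] using
    (summable_norm_prod_of_summable_norm hc).mul_left _

end TrigonometricSeries

section Orthogonality

theorem setIntegral_Icc_fourierChar_intCast_mul (m : ℤ) :
    ∫ x in Set.Icc (0 : ℝ) 1, (𝐞 (m * x) : ℂ) = if m = 0 then 1 else 0 := by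
  rw [integral_Icc_eq_integral_Ioc, ← intervalIntegral.integral_of_le zero_le_one]
  split_ifs with hm
  · simp [hm]
  · have hc : 2 * Real.pi * m * Complex.I ≠ 0 := by
      simp [hm, Real.pi_ne_zero]
    have hperiod : Complex.exp (2 * Real.pi * m * Complex.I) = 1 :=
      Complex.exp_eq_one_iff.mpr ⟨m, by ring⟩
    calc ∫ x in (0 : ℝ)..1, (𝐞 (m * x) : ℂ)
        = ∫ x in (0 : ℝ)..1, Complex.exp (2 * Real.pi * m * Complex.I * x) := by
          congr with x
          rw [Real.fourierChar_apply]
          push_cast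
          ring_nf
      _ = 0 := by simp [integral_exp_mul_complex hc, hperiod]

theorem setIntegral_Icc_fourierChar_sum {ι : Type*} [Fintype ι] (m : ι → ℤ) :
    ∫ x in Set.Icc (0 : ι → ℝ) 1, (𝐞 (∑ i, m i * x i) : ℂ) = if m = 0 then 1 else 0 := by
  simp only [← prod_fourierChar_eq_fourierChar_sum]
  rw [← Set.pi_univ_Icc, volume_pi, Measure.restrict_pi_pi,
    integral_fintype_prod_eq_prod fun i (t : ℝ) => (𝐞 (m i * t) : ℂ)]
  simp only [Pi.zero_apply, Pi.one_apply, setIntegral_Icc_fourierChar_intCast_mul,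
    Fintype.prod_ite_zero, Finset.prod_const_one, funext_iff]

end Orthogonality

/-- `f` is everywhere the sum of its Fourier series, which converges absolutely. -/
structure HasAbsConvFourierSeries (f : ℝ → ℂ) : Prop where
  summable_norm : Summable fun ℓ : ℤ => ‖fourierCoeffR f ℓ‖
  eq_tsum_exp (x : ℝ) :
    f x = ∑' ℓ : ℤ, fourierCoeffR f ℓ * Complex.exp (2 * Real.pi * Complex.I * ℓ * x)

theorem HasAbsConvFourierSeries.eq_tsum_fourierChar {f : ℝ → ℂ} (hf : HasAbsConvFourierSeries f)
    (x : ℝ) : f x = ∑' ℓ : ℤ, fourierCoeffR f ℓ * 𝐞 (ℓ * x) := by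
  rw [hf.eq_tsum_exp]
  congr with ℓ
  rw [Real.fourierChar_apply]
  push_cast
  ring_nf

theorem measurable_of_sum_mul_eq_sum_mul {ι κ : Type*} [Fintype ι] [Fintype κ]
    {d : (ι → ℝ) → κ → ℝ} {δ : (κ → ℤ) → ι → ℤ}
    (hadj : ∀ h x, ∑ k, h k * d x k = ∑ i, δ h i * x i) : Measurable d := by
  classical
  refine measurable_pi_lambda _ fun k => ?_
  have hrow : (fun x => d x k) = fun x : ι → ℝ => ∑ i, δ (Pi.single k 1) i * x i := by
    ext x
    simp [← hadj, Pi.single_apply]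
  rw [hrow]
  fun_prop

theorem setIntegral_Icc_prod_comp_eq_tsum_of_adjoint {ι κ : Type*} [Fintype ι] [Fintype κ]
    {f : κ → ℝ → ℂ} (hf : ∀ k, HasAbsConvFourierSeries (f k))
    {d : (ι → ℝ) → κ → ℝ} {δ : (κ → ℤ) → ι → ℤ}
    (hadj : ∀ h x, ∑ k, h k * d x k = ∑ i, δ h i * x i) :
    ∫ x in Set.Icc (0 : ι → ℝ) 1, ∏ k, f k (d x k) =
      ∑' h : {h : κ → ℤ // δ h = 0}, ∏ k, fourierCoeffR (f k) (h.1 k) := by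
  have : IsFiniteMeasure (volume.restrict (Set.Icc (0 : ι → ℝ) 1)) :=
    ⟨by simpa using isCompact_Icc.measure_lt_top⟩
  calc ∫ x in Set.Icc (0 : ι → ℝ) 1, ∏ k, f k (d x k)
      = ∑' h : κ → ℤ, (∏ k, fourierCoeffR (f k) (h k)) *
          ∫ x in Set.Icc (0 : ι → ℝ) 1, (𝐞 (∑ k, h k * d x k) : ℂ) := by
        simp only [fun k => (hf k).eq_tsum_fourierChar]
        exact integral_prod_tsum_mul_fourierChar (fun k => (hf k).summable_norm)
          (measurable_of_sum_mul_eq_sum_mul hadj).aemeasurable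
    _ = ∑' h : κ → ℤ, {h | δ h = 0}.indicator (fun h => ∏ k, fourierCoeffR (f k) (h k)) h := by
        simp only [hadj, setIntegral_Icc_fourierChar_sum, mul_ite, mul_one, mul_zero,
          Set.indicator_apply, Set.mem_ofPred_eq]
    _ = _ := (tsum_subtype {h | δ h = 0} fun h => ∏ k, fourierCoeffR (f k) (h k)).symm

section LatticeCurl

variable {G R : Type*} [AddCommGroup G] (e : Fin 3 → G)

/-- The discrete curl on the lattice `G` with coordinate steps `e`. A pair `(m, s)` is read as the
link from `s` to `s + e m` for the argument, and as the plaquette with corner `s` normal to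
direction `m` for the value, which is the signed sum of `x` around that plaquette. -/
def latticeCurl [AddCommGroup R] (x : Fin 3 × G → R) : Fin 3 × G → R := fun (m, s) =>
  x (m + 1, s) - x (m + 1, s + e (m + 2)) - x (m + 2, s) + x (m + 2, s + e (m + 1))

/-- The transpose of `latticeCurl e`, taking functions on plaquettes to functions on links. Its
kernel over `ℤ` is the constraint set `𝓗`. -/
def latticeCurlAdjoint [AddCommGroup R] (h : Fin 3 × G → R) : Fin 3 × G → R := fun (m, s) =>
  h (m + 2, s) - h (m + 2, s - e (m + 1)) - h (m + 1, s) + h (m + 1, s - e (m + 2))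

theorem sum_mul_add_right_eq_sum_sub_mul [Fintype G] [Mul R] [AddCommMonoid R]
    (u v : G → R) (a : G) :
    ∑ s, u s * v (s + a) = ∑ s, u (s - a) * v s := by
  rw [← Equiv.sum_comp (Equiv.addRight a) fun s => u (s - a) * v s]
  simp only [Equiv.coe_addRight, add_sub_cancel_right]

theorem sum_mul_latticeCurl [Fintype G] [CommRing R] (h x : Fin 3 × G → R) :
    ∑ p, h p * latticeCurl e x p = ∑ p, latticeCurlAdjoint e h p * x p := by
  simp only [latticeCurl, latticeCurlAdjoint, Fintype.sum_prod_type, mul_add, mul_sub, add_mul,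
    sub_mul, Finset.sum_add_distrib, Finset.sum_sub_distrib]
  simp only [fun m n => sum_mul_add_right_eq_sum_sub_mul (fun s => h (m, s)) fun s => x (n, s),
    Fin.sum_univ_three]
  simp only [Fin.reduceAdd, zero_add]
  ring

theorem setIntegral_Icc_prod_comp_latticeCurl_eq_tsum [Fintype G] {f : Fin 3 × G → ℝ → ℂ}
    (hf : ∀ p, HasAbsConvFourierSeries (f p)) :
    ∫ x in Set.Icc (0 : Fin 3 × G → ℝ) 1, ∏ p, f p (latticeCurl e x p) =
      ∑' h : {h : Fin 3 × G → ℤ // latticeCurlAdjoint e h = 0},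
        ∏ p, fourierCoeffR (f p) (h.1 p) := by
  refine setIntegral_Icc_prod_comp_eq_tsum_of_adjoint hf fun h x => ?_
  rw [sum_mul_latticeCurl e (fun p => (h p : ℝ)) x]
  simp only [latticeCurlAdjoint]
  push_cast
  rfl

end LatticeCurl

section TripleArray

variable (I J K R : Type*)

/-- Triples `(x^a, x^b, x^c)` of arrays of elements of `R`, each indexed by `(i, j, k)`. -/
abbrev TripleArray : Type _ := (I → J → K → R) × (I → J → K → R) × (I → J → K → R)

variable {I J K R}

/-- Regards the three arrays of a triple `(x^a, x^b, x^c)` as the components, in the directions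
`0`, `1`, `2` respectively, of one function on the links `Fin 3 × I × J × K`. -/
def flattenTripleArray : TripleArray I J K R ≃ (Fin 3 × I × J × K → R) where
  toFun x p := ![x.1, x.2.1, x.2.2] p.1 p.2.1 p.2.2.1 p.2.2.2
  invFun y :=
    (fun i j k => y (0, i, j, k), fun i j k => y (1, i, j, k), fun i j k => y (2, i, j, k))
  left_inv _ := rfl
  right_inv y := by
    ext ⟨m, i, j, k⟩
    fin_cases m <;> rfl

theorem measurable_flattenTripleArray [MeasurableSpace R] :
    Measurable (flattenTripleArray : TripleArray I J K R ≃ _) := by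
  refine measurable_pi_lambda _ fun ⟨m, i, j, k⟩ => ?_
  fin_cases m
  · exact (by fun_prop : Measurable fun x : TripleArray I J K R => x.1 i j k)
  · exact (by fun_prop : Measurable fun x : TripleArray I J K R => x.2.1 i j k)
  · exact (by fun_prop : Measurable fun x : TripleArray I J K R => x.2.2 i j k)

theorem measurable_flattenTripleArray_symm [MeasurableSpace R] :
    Measurable (flattenTripleArray : TripleArray I J K R ≃ _).symm := by
  change Measurable fun y : Fin 3 × I × J × K → R =>
    ((fun i j k => y (0, i, j, k), fun i j k => y (1, i, j, k), fun i j k => y (2, i, j, k)) :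
      TripleArray I J K R)
  fun_prop

theorem measurableEmbedding_flattenTripleArray [MeasurableSpace R] :
    MeasurableEmbedding (flattenTripleArray : TripleArray I J K R ≃ _) :=
  MeasurableEquiv.measurableEmbedding
    ⟨flattenTripleArray, measurable_flattenTripleArray, measurable_flattenTripleArray_symm⟩

theorem preimage_flattenTripleArray_Icc_zero_one [Preorder R] [Zero R] [One R] :
    flattenTripleArray ⁻¹' Set.Icc 0 1 = Set.Icc (0 : TripleArray I J K R) 1 := by
  ext x
  simp [flattenTripleArray, Pi.le_def, Prod.le_def, Fin.forall_fin_succ]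

variable [Fintype I] [Fintype J] [Fintype K]

theorem prod_univ_fin_three_prod_prod [CommMonoid R] (g : Fin 3 × I × J × K → R) :
    ∏ p, g p = ∏ i, ∏ j, ∏ k, (g (0, i, j, k) * g (1, i, j, k) * g (2, i, j, k)) := by
  simp only [Fintype.prod_prod_type, Fin.prod_univ_three, Finset.prod_mul_distrib]

theorem volume_preserving_flattenTripleArray [MeasureSpace R] [SigmaFinite (volume : Measure R)] :
    MeasurePreserving (flattenTripleArray : TripleArray I J K R ≃ _) := by
  refine ⟨measurable_flattenTripleArray, (Measure.pi_eq fun s hs => ?_).symm⟩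
  let box (m : Fin 3) : Set (I → J → K → R) :=
    Set.univ.pi fun i => Set.univ.pi fun j => Set.univ.pi fun k => s (m, i, j, k)
  have hbox : flattenTripleArray ⁻¹' Set.univ.pi s = box 0 ×ˢ box 1 ×ˢ box 2 := by
    ext x
    simp [box, flattenTripleArray, Fin.forall_fin_succ]
  rw [Measure.map_apply measurable_flattenTripleArray (.univ_pi hs), hbox]
  simp only [Measure.volume_eq_prod, Measure.prod_prod, box, volume_pi, Measure.pi_pi,
    Fintype.prod_prod_type, Fin.prod_univ_three, mul_assoc]

theorem setIntegral_Icc_zero_one_comp_flattenTripleArray [MeasureSpace R]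
    [SigmaFinite (volume : Measure R)] [Preorder R] [Zero R] [One R] {E : Type*}
    [NormedAddCommGroup E] [NormedSpace ℝ E] (g : (Fin 3 × I × J × K → R) → E) :
    ∫ x in Set.Icc (0 : TripleArray I J K R) 1, g (flattenTripleArray x) =
      ∫ y in Set.Icc 0 1, g y := by
  rw [← volume_preserving_flattenTripleArray.setIntegral_preimage_emb
    measurableEmbedding_flattenTripleArray, preimage_flattenTripleArray_Icc_zero_one]

end TripleArray

section BoxLattice

variable {I J K R : Type*} [AddCommGroup I] [AddCommGroup J] [AddCommGroup K] [AddCommGroup R]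
  (e₁ : I) (e₂ : J) (e₃ : K)

/-- The translations of the lattice `I × J × K` by `e₁`, `e₂`, `e₃` along its coordinate directions
`0`, `1`, `2`. -/
def boxStep : Fin 3 → I × J × K := ![(e₁, 0, 0), (0, e₂, 0), (0, 0, e₃)]

theorem latticeCurl_flattenTripleArray (x : TripleArray I J K R) :
    latticeCurl (boxStep e₁ e₂ e₃) (flattenTripleArray x) = flattenTripleArray
      (fun i j k => x.2.1 i j k - x.2.1 i j (k + e₃) - x.2.2 i j k + x.2.2 i (j + e₂) k,
       fun i j k => x.2.2 i j k - x.2.2 (i + e₁) j k - x.1 i j k + x.1 i j (k + e₃),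
       fun i j k => x.1 i j k - x.1 i (j + e₂) k - x.2.1 i j k + x.2.1 (i + e₁) j k) := by
  ext ⟨m, i, j, k⟩
  fin_cases m <;> simp [latticeCurl, flattenTripleArray, boxStep]

theorem latticeCurlAdjoint_flattenTripleArray_eq_zero_iff (h : TripleArray I J K R) :
    latticeCurlAdjoint (boxStep e₁ e₂ e₃) (flattenTripleArray h) = 0 ↔ ∀ i j k,
      h.2.2 i j k - h.2.2 i (j - e₂) k - h.2.1 i j k + h.2.1 i j (k - e₃) = 0 ∧
      h.1 i j k - h.1 i j (k - e₃) - h.2.2 i j k + h.2.2 (i - e₁) j k = 0 ∧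
      h.2.1 i j k - h.2.1 (i - e₁) j k - h.1 i j k + h.1 i (j - e₂) k = 0 := by
  simp [latticeCurlAdjoint, flattenTripleArray, boxStep, funext_iff, Fin.forall_fin_succ,
    forall_and]

end BoxLattice

theorem stmt6_general {I J K : Type*} [Fintype I] [Fintype J] [Fintype K] [AddCommGroup I]
    [AddCommGroup J] [AddCommGroup K] (e₁ : I) (e₂ : J) (e₃ : K) {fa fb fc : I → J → K → ℝ → ℂ}
    (ha : ∀ i j k, HasAbsConvFourierSeries (fa i j k))
    (hb : ∀ i j k, HasAbsConvFourierSeries (fb i j k))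
    (hc : ∀ i j k, HasAbsConvFourierSeries (fc i j k)) :
    (∫ x in Set.Icc (0 : TripleArray I J K ℝ) 1,
      ∏ i, ∏ j, ∏ k,
        (fc i j k (x.1 i j k - x.1 i (j + e₂) k - x.2.1 i j k + x.2.1 (i + e₁) j k) *
         fb i j k (x.2.2 i j k - x.2.2 (i + e₁) j k - x.1 i j k + x.1 i j (k + e₃)) *
         fa i j k (x.2.1 i j k - x.2.1 i j (k + e₃) - x.2.2 i j k + x.2.2 i (j + e₂) k))) =
      ∑' h : {h : TripleArray I J K ℤ //
          ∀ i j k,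
            h.2.2 i j k - h.2.2 i (j - e₂) k - h.2.1 i j k + h.2.1 i j (k - e₃) = 0 ∧
            h.1 i j k - h.1 i j (k - e₃) - h.2.2 i j k + h.2.2 (i - e₁) j k = 0 ∧
            h.2.1 i j k - h.2.1 (i - e₁) j k - h.1 i j k + h.1 i (j - e₂) k = 0},
        ∏ i, ∏ j, ∏ k,
          (fourierCoeffR (fa i j k) (h.1.1 i j k) *
           fourierCoeffR (fb i j k) (h.1.2.1 i j k) *
           fourierCoeffR (fc i j k) (h.1.2.2 i j k)) := by
  let f : Fin 3 × I × J × K → ℝ → ℂ := flattenTripleArray (fa, fb, fc)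
  have hf (p) : HasAbsConvFourierSeries (f p) := by
    obtain ⟨m, i, j, k⟩ := p
    fin_cases m
    exacts [ha i j k, hb i j k, hc i j k]
  have hflat := setIntegral_Icc_prod_comp_latticeCurl_eq_tsum (boxStep e₁ e₂ e₃) hf
  rw [← setIntegral_Icc_zero_one_comp_flattenTripleArray,
    ← (flattenTripleArray.subtypeEquiv fun h =>
      (latticeCurlAdjoint_flattenTripleArray_eq_zero_iff e₁ e₂ e₃ h).symm).tsum_eq] at hflat
  convert hflat using 1
  · congr with x
    rw [prod_univ_fin_three_prod_prod, latticeCurl_flattenTripleArray]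
    simp [f, flattenTripleArray, mul_comm, mul_left_comm]
  · congr with h
    rw [prod_univ_fin_three_prod_prod]
    simp [f, flattenTripleArray]

theorem stmt6 (L : ℕ) [NeZero L] (f : Fin L → Fin L → Fin L → ℝ → ℂ)
    (hcont : ∀ i j k, Continuous (f i j k))
    (hper : ∀ i j k (x : ℝ), f i j k (x + 1) = f i j k x)
    (habs : ∀ i j k, Summable fun ℓ : ℤ => ‖fourierCoeffR (f i j k) ℓ‖)
    (hrep : ∀ i j k (x : ℝ),
      f i j k x = ∑' ℓ : ℤ, fourierCoeffR (f i j k) ℓ *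
        Complex.exp (2 * Real.pi * Complex.I * ℓ * x)) :
    (∫ x in Set.Icc
        (0 : (Fin L → Fin L → Fin L → ℝ) × (Fin L → Fin L → Fin L → ℝ) ×
          (Fin L → Fin L → Fin L → ℝ)) 1,
      ∏ i, ∏ j, ∏ k,
        (f i j k (x.1 i j k - x.1 i (j + 1) k - x.2.1 i j k + x.2.1 (i + 1) j k) *
         f i j k (x.2.2 i j k - x.2.2 (i + 1) j k - x.1 i j k + x.1 i j (k + 1)) *
         f i j k (x.2.1 i j k - x.2.1 i j (k + 1) - x.2.2 i j k + x.2.2 i (j + 1) k))) =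
      ∑' h : {h : (Fin L → Fin L → Fin L → ℤ) × (Fin L → Fin L → Fin L → ℤ) ×
          (Fin L → Fin L → Fin L → ℤ) //
          ∀ i j k,
            h.2.2 i j k - h.2.2 i (j - 1) k - h.2.1 i j k + h.2.1 i j (k - 1) = 0 ∧
            h.1 i j k - h.1 i j (k - 1) - h.2.2 i j k + h.2.2 (i - 1) j k = 0 ∧
            h.2.1 i j k - h.2.1 (i - 1) j k - h.1 i j k + h.1 i (j - 1) k = 0},
        ∏ i, ∏ j, ∏ k,
          (fourierCoeffR (f i j k) (h.1.1 i j k) *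
           fourierCoeffR (f i j k) (h.1.2.1 i j k) *
           fourierCoeffR (f i j k) (h.1.2.2 i j k)) := by
  have hf (i j k) : HasAbsConvFourierSeries (f i j k) := ⟨habs i j k, hrep i j k⟩
  exact stmt6_general 1 1 1 hf hf hf
end

section
/- Let L ≥ 1 and let f_0, …, f_{L−1} : ℝ → ℂ be 1-periodic functions that are integrable on [0,1]. Define g : ℝ^L → ℂ by g(y) = ∫_{[0,1]^L} ∏_{j=0}^{L−1} f_j(x_j − x_{(j+1) mod L} + y_j) dx. Then for every y ∈ ℝ^L, g(y) = g(∑_{j=0}^{L−1} y_j, 0, …, 0); that is, g(y) depends only on the sum of the components of y. -/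
open MeasureTheory

/-!
Averaging over the unit cube is integration over the torus `(ℝ/ℤ)^L`, where Haar measure is
translation invariant. Translating `x` by `t` changes the arguments `x_j - x_{j+1} + y_j` by the
cyclic difference `t_j - t_{j+1}`, and the cyclic differences are exactly the vectors with zero
sum, so `y` may be replaced by any vector with the same sum.
-/

section CyclicDifference

variable {L : ℕ} [NeZero L] {A : Type*} [AddCommGroup A]

/-- The cyclic difference operator `x ↦ (x_j - x_{j+1})_j`, with indices taken modulo `L`. It
is bundled as an additive homomorphism because the translation argument uses its additivity. -/
def cyclicDiff : (Fin L → A) →+ (Fin L → A) where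
  toFun x j := x j - x (j + 1)
  map_zero' := by ext; simp
  map_add' x y := by ext j; simp only [Pi.add_apply]; abel

theorem cyclicDiff_apply (x : Fin L → A) (j : Fin L) : cyclicDiff x j = x j - x (j + 1) :=
  rfl

theorem exists_cyclicDiff_eq_of_sum_eq_zero {z : Fin L → A} (hz : ∑ j, z j = 0) :
    ∃ t, cyclicDiff t = z := by
  obtain ⟨n, rfl⟩ := Nat.exists_eq_succ_of_ne_zero (NeZero.ne L)
  refine ⟨fun j => -Fin.partialSum z j.castSucc, funext fun j => ?_⟩
  suffices Fin.partialSum z (j + 1).castSucc = Fin.partialSum z j.succ by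
    rw [cyclicDiff_apply, this, Fin.partialSum_succ]
    abel
  cases j using Fin.lastCases with
  | last =>
    have total : Fin.partialSum z (Fin.last n).succ = ∑ j, z j := by
      rw [Fin.partialSum, List.take_of_length_le (by simp), List.sum_ofFn]
    rw [total, hz, Fin.last_add_one, Fin.castSucc_zero, Fin.partialSum_zero]
  | cast j => rw [Fin.coeSucc_eq_succ, Fin.succ_castSucc]

theorem integral_comp_cyclicDiff_add_eq_of_sum_eq [MeasurableSpace A] [MeasurableAdd A]
    {E : Type*} [NormedAddCommGroup E] [NormedSpace ℝ E]
    (μ : Measure (Fin L → A)) [μ.IsAddRightInvariant] (Φ : (Fin L → A) → E)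
    {y z : Fin L → A} (hyz : ∑ j, y j = ∑ j, z j) :
    ∫ x, Φ (cyclicDiff x + y) ∂μ = ∫ x, Φ (cyclicDiff x + z) ∂μ := by
  obtain ⟨t, ht⟩ : ∃ t, cyclicDiff t = y - z :=
    exists_cyclicDiff_eq_of_sum_eq_zero <| by
      simp only [Pi.sub_apply, Finset.sum_sub_distrib, hyz, sub_self]
  calc
    ∫ x, Φ (cyclicDiff x + y) ∂μ = ∫ x, Φ (cyclicDiff (x + t) + z) ∂μ := by
      simp only [map_add, ht, add_assoc, sub_add_cancel]
    _ = ∫ x, Φ (cyclicDiff x + z) ∂μ :=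
      integral_add_right_eq_self (fun x => Φ (cyclicDiff x + z)) t

end CyclicDifference

theorem setIntegral_Icc_eq_integral_unitAddTorus {ι E : Type*} [Fintype ι]
    [NormedAddCommGroup E] [NormedSpace ℝ E] (F : UnitAddTorus ι → E) :
    ∫ x in Set.Icc (0 : ι → ℝ) 1, F (fun i => (x i : UnitAddCircle)) =
      ∫ u, F u ∂Measure.pi fun _ => AddCircle.haarAddCircle := by
  have cube_ae_eq : {x : ι → ℝ | ∀ i, x i ∈ Set.Ioc (0 : ℝ) (0 + 1)} =ᵐ[volume] Set.Icc 0 1 := by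
    simpa only [Set.pi, Set.mem_univ, true_imp_iff, zero_add] using!
      Measure.univ_pi_Ioc_ae_eq_Icc (f := (0 : ι → ℝ)) (g := 1)
  rw [← setIntegral_congr_set cube_ae_eq]
  -- `integral_preimage` refers to a file-local `volume` that unfolds to `haarAddCircle`.
  exact (UnitAddTorus.integral_preimage F 0).symm

theorem stmt7_general {L : ℕ} [NeZero L] {R : Type*} [NormedCommRing R] [NormedSpace ℝ R]
    {f : Fin L → ℝ → R} (hper : ∀ j, Function.Periodic (f j) 1) {y z : Fin L → ℝ}
    (hyz : ∑ j, y j = ∑ j, z j) :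
    ∫ x in Set.Icc (0 : Fin L → ℝ) 1, ∏ j, f j (x j - x (j + 1) + y j) =
      ∫ x in Set.Icc (0 : Fin L → ℝ) 1, ∏ j, f j (x j - x (j + 1) + z j) := by
  let Φ (u : UnitAddTorus (Fin L)) : R := ∏ j, (hper j).lift (u j)
  have on_torus (w : Fin L → ℝ) :
      ∫ x in Set.Icc (0 : Fin L → ℝ) 1, ∏ j, f j (x j - x (j + 1) + w j) =
        ∫ u, Φ (cyclicDiff u + fun i => (w i : UnitAddCircle))
          ∂Measure.pi fun _ => AddCircle.haarAddCircle :=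
    -- The integrands agree definitionally, as `Periodic.lift` computes on classes of reals.
    setIntegral_Icc_eq_integral_unitAddTorus
      fun u => Φ (cyclicDiff u + fun i => (w i : UnitAddCircle))
  have sum_eq : ∑ j, (y j : UnitAddCircle) = ∑ j, (z j : UnitAddCircle) := by
    simpa only [map_sum, QuotientAddGroup.mk'_apply] using
      congrArg (QuotientAddGroup.mk' (AddSubgroup.zmultiples (1 : ℝ))) hyz
  rw [on_torus, on_torus]
  exact integral_comp_cyclicDiff_add_eq_of_sum_eq _ Φ sum_eq

theorem stmt7 (L : ℕ) [NeZero L] (f : Fin L → ℝ → ℂ)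
    (hper : ∀ j (x : ℝ), f j (x + 1) = f j x)
    (hint : ∀ j, IntegrableOn (f j) (Set.Icc (0 : ℝ) 1))
    (g : (Fin L → ℝ) → ℂ)
    (hg : ∀ y : Fin L → ℝ,
      g y = ∫ x in Set.Icc (0 : Fin L → ℝ) 1, ∏ j, f j (x j - x (j + 1) + y j)) :
    ∀ y : Fin L → ℝ,
      g y = g (fun j => if j = 0 then ∑ j', y j' else 0) := by
  intro y
  rw [hg, hg]
  exact stmt7_general hper (by simp)
end

section
/- Let L ≥ 1 and let f_{i,j} : ℝ → ℂ (for 0 ≤ i, j ≤ L−1) be 1-periodic functions, integrable on [0,1] and bounded. Define g_i : ℝ → ℂ by g_i(t) = ∫_{[0,1]^L} f_{i,0}(x_0 − x_1 + t) ∏_{j=1}^{L−1} f_{i,j}(x_j − x_{(j+1) mod L}) dx. Then ∫_{[0,1]^{2L²}} ∏_{i=0}^{L−1} ∏_{j=0}^{L−1} f_{i,j}(x^a_{i,j} − x^a_{i,(j+1) mod L} − x^b_{i,j} + x^b_{(i+1) mod L,j}) dx^a dx^b = ∫_{[0,1]^L} ∏_{i=0}^{L−1} g_i(u_{(i+1)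 mod L} − u_i) du_0⋯du_{L−1}. -/
open MeasureTheory

/-!
Periodicity moves all the integrals to the torus, where Haar measure is translation invariant.
With `b` fixed, row `i` is a cycle of edge differences `a i j - a i (j + 1)` twisted by
`b (i + 1) j - b i j` on edge `j`. Translating `a i` by a primitive concentrates the whole twist on
one edge, so the `a`-integral of row `i` is `g i` evaluated at the total twist
`∑ j, b (i + 1) j - ∑ j, b i j`. The row sums of `b` are independent and uniform on the circle;
they are the variables `u`.
-/

section Measure

variable {X Y E : Type*} {mX : MeasurableSpace X} {mY : MeasurableSpace Y} {μ : Measure X}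
  {ν : Measure Y} [NormedAddCommGroup E] [NormedSpace ℝ E]

lemma integral_comp_of_measurePreserving {q : X → Y} (hq : MeasurePreserving q μ ν) {F : Y → E}
    (hF : AEStronglyMeasurable F ν) : ∫ x, F (q x) ∂μ = ∫ y, F y ∂ν := by
  rw [← hq.map_eq] at hF ⊢
  exact (integral_map hq.aemeasurable hF).symm

end Measure

section UnitCube

lemma measurePreserving_coe_Icc :
    MeasurePreserving ((↑) : ℝ → UnitAddCircle) (volume.restrict (Set.Icc 0 1)) volume := by
  simpa only [zero_add, restrict_Ioc_eq_restrict_Icc] using UnitAddCircle.measurePreserving_mk 0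

variable {X Y : Type*} [MeasureSpace X] [MeasureSpace Y] [Preorder X] [Zero X] [One X]
  {q : X → Y}

lemma measurePreserving_pi_Icc {ι : Type*} [Fintype ι] [SigmaFinite (volume : Measure X)]
    [SigmaFinite (volume : Measure Y)]
    (hq : MeasurePreserving q (volume.restrict (Set.Icc 0 1)) volume) :
    MeasurePreserving (fun (x : ι → X) i ↦ q (x i)) (volume.restrict (Set.Icc 0 1)) volume := by
  have h := measurePreserving_pi (fun _ : ι ↦ volume.restrict (Set.Icc (0 : X) 1))
    (fun _ ↦ volume) (fun _ ↦ hq)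
  rwa [← Measure.restrict_pi_pi, Set.pi_univ_Icc] at h

lemma measurePreserving_prodMap_Icc [SFinite (volume : Measure X)]
    (hq : MeasurePreserving q (volume.restrict (Set.Icc 0 1)) volume) :
    MeasurePreserving (Prod.map q q) (volume.restrict (Set.Icc (0 : X × X) 1)) volume := by
  have h := hq.prod hq
  rwa [Measure.prod_restrict, Set.Icc_prod_Icc] at h

variable {E : Type*} [TopologicalSpace E]

lemma aestronglyMeasurable_periodic_lift {f : ℝ → E} (hf : Function.Periodic f 1)
    (hm : AEStronglyMeasurable f (volume.restrict (Set.Icc 0 1))) :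
    AEStronglyMeasurable (hf.lift : UnitAddCircle → E) volume := by
  rw [← restrict_Ioc_eq_restrict_Icc, ← zero_add (1 : ℝ)] at hm
  refine (hm.comp_measurePreserving ((measurePreserving_subtype_coe measurableSet_Ioc).comp
    (AddCircle.measurePreserving_equivIoc 1))).congr (.of_forall fun x ↦ ?_)
  rw [← AddCircle.coe_equivIoc (p := 1) (a := 0) (y := x), hf.lift_coe]
  simp

end UnitCube

section Coboundary

variable {A : Type*} [AddCommGroup A]

/-- The coboundary map of the cycle with vertices `Fin N`, whose edge `j` joins `j` to `j + 1`. -/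
def cyclicCoboundary (N : ℕ) [NeZero N] : (Fin N → A) →+ (Fin N → A) where
  toFun s j := s j - s (j + 1)
  map_zero' := by ext; simp
  map_add' s t := by ext; simp only [Pi.add_apply]; abel

variable {N : ℕ} [NeZero N]

lemma single_sub_single_zero_mem_range_cyclicCoboundary (k : Fin N) (a : A) :
    Pi.single k a - Pi.single 0 a ∈ (cyclicCoboundary (A := A) N).range := by
  obtain ⟨n, rfl⟩ := Nat.exists_eq_succ_of_ne_zero (NeZero.ne N)
  induction k using Fin.induction with
  | zero => simp
  | succ k ih =>
    have h : Pi.single k.succ a - Pi.single k.castSucc a ∈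
        (cyclicCoboundary (A := A) (n + 1)).range := by
      refine ⟨Pi.single k.succ a, ?_⟩
      ext j
      simp [cyclicCoboundary, Pi.single_apply, ← Fin.coeSucc_eq_succ]
    simpa using add_mem h ih

lemma exists_cyclic_primitive (d : Fin N → A) :
    ∃ s : Fin N → A, ∀ j, s j - s (j + 1) + d j = (Pi.single 0 (∑ k, d k) : Fin N → A) j := by
  have h : Pi.single 0 (∑ k, d k) - d ∈ (cyclicCoboundary (A := A) N).range := by
    have hd : d - Pi.single 0 (∑ k, d k) = ∑ k, (Pi.single k (d k) - Pi.single 0 (d k)) := by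
      rw [Finset.sum_sub_distrib, Finset.univ_sum_single]
      exact congrArg (d - ·) (map_sum (AddMonoidHom.single (fun _ : Fin N ↦ A) 0) d _)
    rw [← neg_sub, neg_mem_iff, hd]
    exact sum_mem fun k _ ↦ single_sub_single_zero_mem_range_cyclicCoboundary k (d k)
  obtain ⟨s, hs⟩ := h
  exact ⟨s, fun j ↦ by rw [← eq_sub_iff_add_eq]; exact congrFun hs j⟩

end Coboundary

/-- The difference of two coordinates, as a homomorphism. -/
def coordSub {ι : Type*} (A : Type*) [AddCommGroup A] (i j : ι) : (ι → A) →+ A :=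
  Pi.evalAddMonoidHom (fun _ ↦ A) i - Pi.evalAddMonoidHom (fun _ ↦ A) j

/-- The argument of the `j`-th factor of a cyclic product of differences, with the twist `p.1`
placed on edge `0`. -/
@[simps]
def twistedEdge {N : ℕ} [NeZero N] (A : Type*) [AddCommGroup A] (j : Fin N) :
    A × (Fin N → A) →+ A where
  toFun p := p.2 j - p.2 (j + 1) + (Pi.single 0 p.1 : Fin N → A) j
  map_zero' := by simp
  map_add' p q := by simp only [Prod.fst_add, Prod.snd_add, Pi.single_add, Pi.add_apply]; abel

/-- The plaquette variable at `(i, j)` of a lattice whose rows are cycles of length `N` and whose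
row `i` is glued to row `τ i`; the components of `x` are the edge variables `a` and `b`. -/
@[simps]
def plaquette {ι : Type*} {N : ℕ} [NeZero N] (A : Type*) [AddCommGroup A] (τ : ι → ι) (i : ι)
    (j : Fin N) : (ι → Fin N → A) × (ι → Fin N → A) →+ A where
  toFun x := x.1 i j - x.1 i (j + 1) - x.2 i j + x.2 (τ i) j
  map_zero' := by simp
  map_add' x y := by simp only [Prod.fst_add, Prod.snd_add, Pi.add_apply]; abel

section Surjectivity

variable {ι A : Type*} [AddCommGroup A]

lemma coordSub_surjective_or_eq_zero (i j : ι) :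
    Function.Surjective (coordSub A i j) ∨ coordSub A i j = 0 := by
  classical
  rcases eq_or_ne i j with rfl | h
  · exact .inr (sub_self _)
  · exact .inl fun y ↦ ⟨Pi.single i y, by simp [coordSub, h.symm]⟩

variable {N : ℕ} [NeZero N]

lemma twistedEdge_surjective_or_eq_zero (j : Fin N) :
    Function.Surjective (twistedEdge A j) ∨ twistedEdge A j = 0 := by
  rcases eq_or_ne j 0 with rfl | hj
  · exact .inl fun y ↦ ⟨(y, 0), by simp⟩
  · by_cases h : j + 1 = j
    · exact .inr (by ext; simp [hj, h])
    · exact .inl fun y ↦ ⟨(0, Pi.single j y), by simp [h]⟩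

lemma plaquette_surjective_or_eq_zero (τ : ι → ι) (i : ι) (j : Fin N) :
    Function.Surjective (plaquette A τ i j) ∨ plaquette A τ i j = 0 := by
  classical
  by_cases hj : j + 1 = j
  · by_cases hi : τ i = i
    · exact .inr (by ext; simp [hi, hj])
    · exact .inl fun y ↦ ⟨(0, Pi.single (τ i) (Pi.single j y)), by simp [Ne.symm hi]⟩
  · exact .inl fun y ↦ ⟨(Pi.single i (Pi.single j y), 0), by simp [hj]⟩

end Surjectivity

section Homomorphism

variable {G A E : Type*} [AddGroup G] [TopologicalSpace G] [IsTopologicalAddGroup G]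
  [MeasurableSpace G] [BorelSpace G] {μ : Measure G} [μ.IsAddHaarMeasure] [IsProbabilityMeasure μ]
  [AddCommGroup A] [TopologicalSpace A] [IsTopologicalAddGroup A] [CompactSpace A]
  [MeasurableSpace A] [BorelSpace A] {ν : Measure A} [ν.IsAddHaarMeasure] [IsProbabilityMeasure ν]
  [TopologicalSpace E]

/-- `F` is only controlled up to null sets, so `φ` must not map onto a nontrivial null subgroup. -/
lemma aestronglyMeasurable_comp_hom_add {F : A → E} (hF : AEStronglyMeasurable F ν) {φ : G →+ A}
    (hφ : Continuous φ) (h : Function.Surjective φ ∨ φ = 0) (t : A) :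
    AEStronglyMeasurable (fun x ↦ F (φ x + t)) μ := by
  rcases h with h | rfl
  · exact (hF.comp_measurePreserving (measurePreserving_add_right ν t)).comp_measurePreserving
      (φ.measurePreserving hφ h (by simp))
  · simpa using aestronglyMeasurable_const

end Homomorphism

section CyclicKernel

variable {A 𝕜 : Type*} [AddCommGroup A] [RCLike 𝕜] {N : ℕ} [NeZero N]

lemma prod_twistedEdge {M : Type*} [CommMonoid M] (F : Fin N → A → M) (t : A) (x : Fin N → A) :
    ∏ j, F j (twistedEdge A j (t, x)) =
      F 0 (x 0 - x 1 + t) * ∏ j ∈ Finset.Ioi 0, F j (x j - x (j + 1)) := by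
  have hIoi : Finset.univ.erase (0 : Fin N) = Finset.Ioi 0 := by
    ext j
    simp [Fin.pos_iff_ne_zero]
  rw [← Finset.mul_prod_erase _ _ (Finset.mem_univ 0), hIoi]
  congr 1
  · simp
  · refine Finset.prod_congr rfl fun j hj ↦ ?_
    simp [(Finset.mem_Ioi.mp hj).ne']

variable [MeasureSpace A]

/-- The function `g` of the paper over an arbitrary group `A`: the integral of a cyclic product of
differences, twisted by `t` on edge `0`. -/
noncomputable def cyclicKernel (F : Fin N → A → 𝕜) (t : A) : 𝕜 :=
  ∫ x : Fin N → A, F 0 (x 0 - x 1 + t) * ∏ j ∈ Finset.Ioi 0, F j (x j - x (j + 1))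

variable [MeasurableAdd A] [SigmaFinite (volume : Measure A)]
  [(volume : Measure A).IsAddRightInvariant]

lemma integral_cyclic_eq_cyclicKernel (F : Fin N → A → 𝕜) (d : Fin N → A) :
    ∫ x : Fin N → A, ∏ j, F j (x j - x (j + 1) + d j) = cyclicKernel F (∑ j, d j) := by
  obtain ⟨s, hs⟩ := exists_cyclic_primitive d
  simp only [cyclicKernel, ← prod_twistedEdge]
  rw [← integral_add_right_eq_self _ s]
  congr! 4 with _ j
  simp only [twistedEdge_apply, ← hs, Pi.add_apply]
  abel

lemma integral_prod_plaquette_left {ι : Type*} [Fintype ι] (τ : ι → ι)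
    (F : ι → Fin N → A → 𝕜) (b : ι → Fin N → A) :
    ∫ a, ∏ i, ∏ j, F i j (plaquette A τ i j (a, b)) =
      ∏ i, cyclicKernel (F i) (∑ j, b (τ i) j - ∑ j, b i j) := by
  have hrow (a : ι → Fin N → A) (i : ι) (j : Fin N) : plaquette A τ i j (a, b) =
      a i j - a i (j + 1) + (b (τ i) j - b i j) := by
    rw [plaquette_apply]
    abel
  simp only [hrow, ← Finset.sum_sub_distrib, ← integral_cyclic_eq_cyclicKernel]
  exact integral_fintype_prod_volume_eq_prod
    fun i (a : Fin N → A) ↦ ∏ j, F i j (a j - a (j + 1) + (b (τ i) j - b i j))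

end CyclicKernel

section CompactGroup

variable {A 𝕜 : Type*} [AddCommGroup A] [TopologicalSpace A] [IsTopologicalAddGroup A]
  [CompactSpace A] [SecondCountableTopology A] [MeasureSpace A] [BorelSpace A]
  [(volume : Measure A).IsAddHaarMeasure] [IsProbabilityMeasure (volume : Measure A)] [RCLike 𝕜]

lemma measurePreserving_sum_apply {κ : Type*} [Fintype κ] [Nonempty κ] :
    MeasurePreserving (fun x : κ → A ↦ ∑ k, x k) := by
  classical
  let φ : (κ → A) →+ A := ∑ k, Pi.evalAddMonoidHom (fun _ ↦ A) k
  have hφ : ⇑φ = fun x ↦ ∑ k, x k := by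
    ext x
    simp [φ]
  have hsurj : Function.Surjective φ := fun y ↦
    ⟨Pi.single (Classical.arbitrary κ) y, by simp [hφ]⟩
  rw [← hφ]
  exact φ.measurePreserving (by rw [hφ]; fun_prop) hsurj (by simp)

lemma aestronglyMeasurable_comp_coordSub_add {ι E : Type*} [Fintype ι] [TopologicalSpace E]
    {F : A → E} (hF : AEStronglyMeasurable F volume) (i j : ι) (t : A) :
    AEStronglyMeasurable (fun x : ι → A ↦ F (x i - x j + t)) volume :=
  aestronglyMeasurable_comp_hom_add hF ((continuous_apply i).sub (continuous_apply j))
    (coordSub_surjective_or_eq_zero i j) t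

variable {ι : Type*} [Fintype ι] {N : ℕ} [NeZero N]

lemma aestronglyMeasurable_cyclicKernel {F : Fin N → A → 𝕜}
    (hF : ∀ j, AEStronglyMeasurable (F j) volume) :
    AEStronglyMeasurable (cyclicKernel F) volume := by
  have hprod : AEStronglyMeasurable (fun p : A × (Fin N → A) ↦ ∏ j, F j (twistedEdge A j p))
      (volume.prod volume) := by
    refine Finset.aestronglyMeasurable_fun_prod _ fun j _ ↦ ?_
    have hc : Continuous (twistedEdge A j) :=
      (by fun_prop : Continuous fun p : A × (Fin N → A) ↦ p.2 j - p.2 (j + 1)).add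
        ((continuous_apply j).comp ((continuous_single 0).comp continuous_fst))
    simpa only [add_zero] using
      aestronglyMeasurable_comp_hom_add (hF j) hc (twistedEdge_surjective_or_eq_zero j) 0
  simpa only [prod_twistedEdge] using! hprod.integral_prod_right'

lemma aestronglyMeasurable_prod_cyclicKernel (τ : ι → ι) {F : ι → Fin N → A → 𝕜}
    (hF : ∀ i j, AEStronglyMeasurable (F i j) volume) :
    AEStronglyMeasurable (fun u : ι → A ↦ ∏ i, cyclicKernel (F i) (u (τ i) - u i)) volume := by
  refine Finset.aestronglyMeasurable_fun_prod _ fun i _ ↦ ?_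
  simpa only [add_zero] using aestronglyMeasurable_comp_coordSub_add
    (aestronglyMeasurable_cyclicKernel (hF i)) (τ i) i 0

lemma aestronglyMeasurable_prod_plaquette (τ : ι → ι) {F : ι → Fin N → A → 𝕜}
    (hF : ∀ i j, AEStronglyMeasurable (F i j) volume) :
    AEStronglyMeasurable (fun x ↦ ∏ i, ∏ j, F i j (plaquette A τ i j x)) volume := by
  refine Finset.aestronglyMeasurable_fun_prod _ fun i _ ↦
    Finset.aestronglyMeasurable_fun_prod _ fun j _ ↦ ?_
  have hc : Continuous (plaquette A τ i j) := by
    simp only [funext (plaquette_apply A τ i j)]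
    fun_prop
  have : (volume : Measure ((ι → Fin N → A) × (ι → Fin N → A))).IsAddHaarMeasure :=
    Measure.prod.instIsAddHaarMeasure _ _
  simpa only [add_zero] using
    aestronglyMeasurable_comp_hom_add (hF i j) hc (plaquette_surjective_or_eq_zero τ i j) 0

lemma integrable_prod_plaquette (τ : ι → ι) {F : ι → Fin N → A → 𝕜}
    (hF : ∀ i j, AEStronglyMeasurable (F i j) volume) (hb : ∀ i j, ∃ C : ℝ, ∀ x, ‖F i j x‖ ≤ C) :
    Integrable (fun x ↦ ∏ i, ∏ j, F i j (plaquette A τ i j x)) volume := by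
  choose C hC using hb
  refine .of_bound (aestronglyMeasurable_prod_plaquette τ hF) (∏ i, ∏ j, C i j)
    (.of_forall fun x ↦ ?_)
  simp only [norm_prod]
  gcongr
  exact hC _ _ _

theorem integral_prod_plaquette (τ : ι → ι) {F : ι → Fin N → A → 𝕜}
    (hF : ∀ i j, AEStronglyMeasurable (F i j) volume) (hb : ∀ i j, ∃ C : ℝ, ∀ x, ‖F i j x‖ ≤ C) :
    ∫ x, ∏ i, ∏ j, F i j (plaquette A τ i j x) =
      ∫ u : ι → A, ∏ i, cyclicKernel (F i) (u (τ i) - u i) := by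
  have hsum : MeasurePreserving (fun (b : ι → Fin N → A) i ↦ ∑ j, b i j) :=
    volume_preserving_pi fun _ ↦ measurePreserving_sum_apply
  calc
    _ = ∫ b : ι → Fin N → A, ∫ a, ∏ i, ∏ j, F i j (plaquette A τ i j (a, b)) :=
      integral_prod_symm _ (integrable_prod_plaquette τ hF hb)
    _ = ∫ b : ι → Fin N → A, ∏ i, cyclicKernel (F i) (∑ j, b (τ i) j - ∑ j, b i j) := by
      simp only [integral_prod_plaquette_left]
    _ = _ := integral_comp_of_measurePreserving hsum (aestronglyMeasurable_prod_cyclicKernel τ hF)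

end CompactGroup

section Circle

instance isProbabilityMeasure_volume_unitAddCircle :
    IsProbabilityMeasure (volume : Measure UnitAddCircle) :=
  ⟨UnitAddCircle.measure_univ⟩

variable {ι 𝕜 : Type*} [Fintype ι] [RCLike 𝕜] {N : ℕ} [NeZero N]

lemma cyclicKernel_coe {F : Fin N → UnitAddCircle → 𝕜}
    (hF : ∀ j, AEStronglyMeasurable (F j) volume) (t : ℝ) :
    cyclicKernel F t = ∫ x in Set.Icc (0 : Fin N → ℝ) 1,
      F 0 ↑(x 0 - x 1 + t) * ∏ j ∈ Finset.Ioi 0, F j ↑(x j - x (j + 1)) := by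
  refine (integral_comp_of_measurePreserving (measurePreserving_pi_Icc measurePreserving_coe_Icc)
    (.mul (aestronglyMeasurable_comp_coordSub_add (hF 0) 0 1 t)
      (Finset.aestronglyMeasurable_fun_prod _ fun j _ ↦ ?_))).symm
  simpa only [add_zero] using aestronglyMeasurable_comp_coordSub_add (hF j) j (j + 1) 0

theorem stmt8_general (τ : ι → ι) (f : ι → Fin N → ℝ → 𝕜)
    (hper : ∀ i j, Function.Periodic (f i j) 1)
    (hmeas : ∀ i j, AEStronglyMeasurable (f i j) (volume.restrict (Set.Icc (0 : ℝ) 1)))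
    (hbd : ∀ i j, ∃ C : ℝ, ∀ x : ℝ, ‖f i j x‖ ≤ C)
    (g : ι → ℝ → 𝕜)
    (hg : ∀ i (t : ℝ),
      g i t = ∫ x in Set.Icc (0 : Fin N → ℝ) 1,
        f i 0 (x 0 - x 1 + t) * ∏ j ∈ Finset.Ioi (0 : Fin N), f i j (x j - x (j + 1))) :
    (∫ x in Set.Icc (0 : (ι → Fin N → ℝ) × (ι → Fin N → ℝ)) 1,
      ∏ i, ∏ j, f i j (x.1 i j - x.1 i (j + 1) - x.2 i j + x.2 (τ i) j)) =
      ∫ u in Set.Icc (0 : ι → ℝ) 1, ∏ i, g i (u (τ i) - u i) := by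
  let F (i : ι) (j : Fin N) : UnitAddCircle → 𝕜 := (hper i j).lift
  have hF (i j) : AEStronglyMeasurable (F i j) volume :=
    aestronglyMeasurable_periodic_lift (hper i j) (hmeas i j)
  have hb (i j) : ∃ C : ℝ, ∀ x, ‖F i j x‖ ≤ C :=
    (hbd i j).imp fun C hC ↦ QuotientAddGroup.mk_surjective.forall.mpr hC
  have hgF (i t) : g i t = cyclicKernel (F i) t := (hg i t).trans (cyclicKernel_coe (hF i) t).symm
  have hu := measurePreserving_pi_Icc (ι := ι) measurePreserving_coe_Icc
  have hrow := measurePreserving_pi_Icc (ι := Fin N) measurePreserving_coe_Icc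
  have hx := measurePreserving_prodMap_Icc (measurePreserving_pi_Icc (ι := ι) hrow)
  calc
    _ = ∫ x, ∏ i, ∏ j, F i j (plaquette UnitAddCircle τ i j x) :=
      integral_comp_of_measurePreserving hx (aestronglyMeasurable_prod_plaquette τ hF)
    _ = ∫ u : ι → UnitAddCircle, ∏ i, cyclicKernel (F i) (u (τ i) - u i) :=
      integral_prod_plaquette τ hF hb
    _ = ∫ u in Set.Icc (0 : ι → ℝ) 1, ∏ i, cyclicKernel (F i) ↑(u (τ i) - u i) :=
      (integral_comp_of_measurePreserving hu (aestronglyMeasurable_prod_cyclicKernel τ hF)).symm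
    _ = _ := by simp only [hgF]

end Circle

theorem stmt8 (L : ℕ) [NeZero L] (f : Fin L → Fin L → ℝ → ℂ)
    (hper : ∀ i j (x : ℝ), f i j (x + 1) = f i j x)
    (hint : ∀ i j, IntegrableOn (f i j) (Set.Icc (0 : ℝ) 1))
    (hbd : ∀ i j, ∃ C : ℝ, ∀ x : ℝ, ‖f i j x‖ ≤ C)
    (g : Fin L → ℝ → ℂ)
    (hg : ∀ i (t : ℝ),
      g i t = ∫ x in Set.Icc (0 : Fin L → ℝ) 1,
        f i 0 (x 0 - x 1 + t) * ∏ j ∈ Finset.Ioi (0 : Fin L), f i j (x j - x (j + 1))) :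
    (∫ x in Set.Icc (0 : (Fin L → Fin L → ℝ) × (Fin L → Fin L → ℝ)) 1,
      ∏ i, ∏ j, f i j (x.1 i j - x.1 i (j + 1) - x.2 i j + x.2 (i + 1) j)) =
      ∫ u in Set.Icc (0 : Fin L → ℝ) 1, ∏ i, g i (u (i + 1) - u i) :=
  stmt8_general (· + 1) f hper (fun i j ↦ (hint i j).aestronglyMeasurable) hbd g hg
end

section
/- Let m ≥ 1, L = 2m, and let f : ℝ → ℂ be a 1-periodic function integrable on [0,1] and bounded. Then ∫_{[0,1]^{2m}} ∏_{i=0}^{2m−1} f(x_{(i+1) mod 2m} − x_{(i−1) mod 2m}) dx = (∫_{[0,1]^m} ∏_{j=0}^{m−1} f(y_{(j+1) mod m} − y_j) dy)²; that is, for even L the second-order-coupled integral decouples into the square of a first-order-coupled integral of half the dimension. -/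
open MeasureTheory

/-!
In the product over `Fin (2 * m)` the factor at `i` couples only the neighbours `i - 1` and
`i + 1`, which have the same parity. So the odd `i` give a first-order cyclic product in the even
variables, the even `i` one in the odd variables, and Fubini separates the two.
-/

section EvenOdd

/-- The splitting of `Fin (2 * m)` into its even elements `2 * j`, on the left, and its odd
elements `2 * j + 1`, on the right. It separates the two groups of variables that do not interact
under second-order coupling. -/
noncomputable def evenOddEquiv (m : ℕ) : Fin m ⊕ Fin m ≃ Fin (2 * m) :=
  Equiv.ofBijective
    (Sum.elim (fun j => ⟨2 * j.val, by omega⟩) (fun j => ⟨2 * j.val + 1, by omega⟩)) <| by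
    rw [Fintype.bijective_iff_injective_and_card]
    refine ⟨?_, by simp [two_mul]⟩
    rintro (a | a) (b | b) _ <;> grind

variable {m : ℕ}

lemma val_evenOddEquiv_inl (j : Fin m) : (evenOddEquiv m (.inl j)).val = 2 * j.val := rfl

lemma val_evenOddEquiv_inr (j : Fin m) : (evenOddEquiv m (.inr j)).val = 2 * j.val + 1 := rfl

variable [NeZero m]

lemma evenOddEquiv_inl_add_one (j : Fin m) :
    evenOddEquiv m (.inl j) + 1 = evenOddEquiv m (.inr j) := by
  ext
  rw [Fin.val_add, val_evenOddEquiv_inl, val_evenOddEquiv_inr, Fin.val_one', Nat.add_mod_mod,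
    Nat.mod_eq_of_lt (by omega)]

lemma evenOddEquiv_inr_add_one (j : Fin m) :
    evenOddEquiv m (.inr j) + 1 = evenOddEquiv m (.inl (j + 1)) := by
  ext
  calc (evenOddEquiv m (.inr j) + 1).val
      = (2 * (j.val + 1)) % (2 * m) := by
        rw [Fin.val_add, val_evenOddEquiv_inr, Fin.val_one', Nat.add_mod_mod, mul_add_one]
    _ = 2 * ((j.val + 1) % m) := Nat.mul_mod_mul_left ..
    _ = (evenOddEquiv m (.inl (j + 1))).val := by
        rw [val_evenOddEquiv_inl, Fin.val_add, Fin.val_one', Nat.add_mod_mod]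

lemma prod_sub_one_add_one_eq_prod_even_mul_prod_odd {X M : Type*} [CommMonoid M]
    (K : X → X → M) (x : Fin (2 * m) → X) :
    ∏ i, K (x (i - 1)) (x (i + 1)) =
      (∏ j, K (x (evenOddEquiv m (.inl j))) (x (evenOddEquiv m (.inl (j + 1))))) *
        ∏ j, K (x (evenOddEquiv m (.inr j))) (x (evenOddEquiv m (.inr (j + 1)))) := by
  calc ∏ i, K (x (i - 1)) (x (i + 1))
      -- Labelled by `i - 1` instead of `i`, the even factors are those in the even variables.
      = ∏ i, K (x i) (x (i + 1 + 1)) := by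
        rw [← Equiv.prod_comp (Equiv.addRight 1)]
        simp only [Equiv.coe_addRight, add_sub_cancel_right]
    _ = _ := by
        rw [← (evenOddEquiv m).prod_comp, Fintype.prod_sum_type]
        simp only [evenOddEquiv_inl_add_one, evenOddEquiv_inr_add_one]

end EvenOdd

lemma measurePreserving_pi_sum_equiv {α β γ : Type*} [Fintype α] [Fintype β] [Fintype γ]
    {X : γ → Type*} [∀ c, MeasurableSpace (X c)] (μ : ∀ c, Measure (X c)) [∀ c, SigmaFinite (μ c)]
    (e : α ⊕ β ≃ γ) :
    MeasurePreserving
      ((MeasurableEquiv.piCongrLeft X e).symm.trans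
        (MeasurableEquiv.sumPiEquivProdPi fun s => X (e s)))
      (Measure.pi μ)
      ((Measure.pi fun a => μ (e (.inl a))).prod (Measure.pi fun b => μ (e (.inr b)))) :=
  (measurePreserving_sumPiEquivProdPi fun s => μ (e s)).comp
    ((measurePreserving_piCongrLeft μ e).symm _)

lemma integral_pi_mul_of_sum_equiv {α β γ 𝕜 : Type*} [Fintype α] [Fintype β] [Fintype γ]
    [RCLike 𝕜] {X : γ → Type*} [∀ c, MeasurableSpace (X c)] (μ : ∀ c, Measure (X c))
    [∀ c, SigmaFinite (μ c)] (e : α ⊕ β ≃ γ)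
    (g : (∀ a, X (e (.inl a))) → 𝕜) (h : (∀ b, X (e (.inr b))) → 𝕜) :
    ∫ x, g (fun a => x (e (.inl a))) * h (fun b => x (e (.inr b))) ∂Measure.pi μ =
      (∫ y, g y ∂Measure.pi fun a => μ (e (.inl a))) *
        ∫ z, h z ∂Measure.pi fun b => μ (e (.inr b)) := by
  rw [← integral_prod_mul]
  exact (measurePreserving_pi_sum_equiv μ e).integral_comp' fun p => g p.1 * h p.2

lemma measure_pi_restrict_Icc {ι : Type*} [Fintype ι] {X : ι → Type*} [∀ i, Preorder (X i)]
    [∀ i, MeasurableSpace (X i)] (μ : ∀ i, Measure (X i)) [∀ i, SigmaFinite (μ i)]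
    (a b : ∀ i, X i) :
    (Measure.pi μ).restrict (Set.Icc a b) =
      Measure.pi fun i => (μ i).restrict (Set.Icc (a i) (b i)) := by
  rw [← Set.pi_univ_Icc, Measure.restrict_pi_pi]

/-- If the cyclic product on the right is not integrable, both sides are the junk value `0`. -/
theorem stmt14_general {X 𝕜 : Type*} [MeasurableSpace X] [RCLike 𝕜] (μ : Measure X)
    [SigmaFinite μ] (m : ℕ) [NeZero m] (K : X → X → 𝕜) :
    ∫ x : Fin (2 * m) → X, ∏ i, K (x (i - 1)) (x (i + 1)) ∂Measure.pi (fun _ => μ) =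
      (∫ y : Fin m → X, ∏ j, K (y j) (y (j + 1)) ∂Measure.pi fun _ => μ) ^ 2 := by
  simp_rw [prod_sub_one_add_one_eq_prod_even_mul_prod_odd, sq]
  exact integral_pi_mul_of_sum_equiv (fun _ => μ) (evenOddEquiv m)
    (fun y => ∏ j, K (y j) (y (j + 1))) fun z => ∏ j, K (z j) (z (j + 1))

theorem stmt14 (m : ℕ) [NeZero m] (f : ℝ → ℂ)
    (hper : ∀ x : ℝ, f (x + 1) = f x)
    (hint : IntegrableOn f (Set.Icc (0 : ℝ) 1))
    (hbd : ∃ C : ℝ, ∀ x : ℝ, ‖f x‖ ≤ C) :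
    (∫ x in Set.Icc (0 : Fin (2 * m) → ℝ) 1,
        ∏ i, f (x (i + 1) - x (i - 1))) =
      (∫ y in Set.Icc (0 : Fin m → ℝ) 1, ∏ j, f (y (j + 1) - y j)) ^ 2 := by
  simp_rw [volume_pi, measure_pi_restrict_Icc]
  exact stmt14_general (volume.restrict (Set.Icc 0 1)) m fun s t => f (t - s)
end

section
/- Let L ≥ 1 be odd and let f : ℝ → ℂ be a 1-periodic function integrable on [0,1] and bounded. Then ∫_{[0,1]^L} ∏_{i=0}^{L−1} f(x_{(i+1) mod L} − x_{(i−1) mod L}) dx = ∫_{[0,1]^L} ∏_{j=0}^{L−1} f(y_{(j+1) mod L} − y_j) dy; that is, for odd L the second-order-coupled integral equals the first-order-coupled integral in the same dimension. -/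
/-!
In a finite abelian group of odd order doubling is a bijection. The substitution `i = 2j + g` turns
`i + g` and `i - g` into `2(j + g)` and `2j`, so after relabelling the variables by doubling, which
preserves a product measure with equal factors, the second-order coupling becomes the first-order
one.
-/

open MeasureTheory

theorem integral_pi_comp_equiv {ι ι' α E : Type*} [Fintype ι] [Fintype ι'] [MeasurableSpace α]
    [NormedAddCommGroup E] [NormedSpace ℝ E] (μ : Measure α) [SigmaFinite μ] (σ : ι ≃ ι')
    (F : (ι → α) → E) :
    ∫ x, F (x ∘ σ) ∂Measure.pi (fun _ : ι' => μ) = ∫ y, F y ∂Measure.pi (fun _ : ι => μ) :=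
  (measurePreserving_arrowCongr' (fun _ => μ) (fun _ => μ) σ.symm (.refl α)
    fun _ => .id μ).integral_comp' F

theorem prod_add_sub_eq_prod_two_nsmul {G α M : Type*} [AddCommGroup G] [Fintype G] [CommMonoid M]
    (hodd : Odd (Nat.card G)) (g : G) (F : α → α → M) (x : G → α) :
    ∏ i, F (x (i + g)) (x (i - g)) = ∏ j, F (x (2 • (j + g))) (x (2 • j)) := by
  have hbij := (nsmulCoprime hodd.coprime_two_right).bijective
  refine (Fintype.prod_bijective (fun j => 2 • j + g)
    ((AddGroup.addRight_bijective g).comp hbij) _ _ fun j => ?_).symm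
  rw [add_sub_cancel_right, add_assoc, ← two_nsmul, ← nsmul_add]

theorem stmt15_general {G α A : Type*} [AddCommGroup G] [Fintype G] [MeasurableSpace α]
    [NormedCommRing A] [NormedSpace ℝ A] (hodd : Odd (Nat.card G)) (g : G)
    (μ : Measure α) [SigmaFinite μ] (F : α → α → A) :
    ∫ x, ∏ i, F (x (i + g)) (x (i - g)) ∂Measure.pi (fun _ : G => μ) =
      ∫ y, ∏ j, F (y (j + g)) (y j) ∂Measure.pi (fun _ : G => μ) := by
  simp only [prod_add_sub_eq_prod_two_nsmul hodd]
  exact integral_pi_comp_equiv μ (nsmulCoprime hodd.coprime_two_right)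
    fun y => ∏ j, F (y (j + g)) (y j)

theorem stmt15 (L : ℕ) [NeZero L] (hodd : Odd L) (f : ℝ → ℂ)
    (hper : ∀ x : ℝ, f (x + 1) = f x)
    (hint : IntegrableOn f (Set.Icc (0 : ℝ) 1))
    (hbd : ∃ C : ℝ, ∀ x : ℝ, ‖f x‖ ≤ C) :
    (∫ x in Set.Icc (0 : Fin L → ℝ) 1, ∏ i, f (x (i + 1) - x (i - 1))) =
      ∫ y in Set.Icc (0 : Fin L → ℝ) 1, ∏ j, f (y (j + 1) - y j) := by
  rw [← Set.pi_univ_Icc, volume_pi, Measure.restrict_pi_pi]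
  exact stmt15_general (by rwa [Nat.card_fin]) (1 : Fin L) (volume.restrict (Set.Icc 0 1))
    fun a b => f (a - b)
end

section
/- Let L ≥ 1 and let h = (h_{i,j})_{0≤i,j≤L−1} ∈ ℤ^{L²}. Then ∫_{[0,1]^{2L²}} exp(2πi ∑_{i=0}^{L−1} ∑_{j=0}^{L−1} h_{i,j} (x^a_{i,j} − x^a_{i,(j+1) mod L} − x^b_{i,j} + x^b_{(i+1) mod L,j})) dx^a dx^b equals 1 if all the components h_{i,j} are equal to one another, and equals 0 otherwise. -/
open MeasureTheory

/-! Summation by parts moves the lattice differences from the gauge variables onto `h`. The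
integrand is then a product of two characters of the torus whose frequencies are the differences of
`h` in the two lattice directions, and a character has integral `1` over the unit cube when its
frequency vanishes and `0` otherwise. Both frequencies vanish exactly when `h` is invariant under
the two lattice translations; on `Fin L × Fin L` these act transitively, so `h` is constant. -/

open Set Function
open scoped fwdDiff

section FiniteDifferences

theorem fwdDiff_eq_zero_iff {M A : Type*} [AddCommMonoid M] [AddCommGroup A] {c : M} {f : M → A} :
    Δ_[c] f = 0 ↔ Periodic f c :=
  funext_iff.trans <| forall_congr' fun _ => sub_eq_zero

theorem periodic_neg_iff {G α : Type*} [AddGroup G] {f : G → α} {c : G} :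
    Periodic f (-c) ↔ Periodic f c :=
  ⟨fun hf => neg_neg c ▸ hf.neg, Periodic.neg⟩

variable {G R : Type*} [AddCommGroup G] [Fintype G] [NonUnitalNonAssocRing R]

theorem sum_mul_fwdDiff (c : G) (f g : G → R) :
    ∑ x, f x * Δ_[c] g x = ∑ x, Δ_[-c] f x * g x := by
  have hshift : ∑ x, f x * g (x + c) = ∑ x, f (x + -c) * g x :=
    Fintype.sum_equiv (Equiv.addRight c) _ _ fun x => by simp
  simp only [fwdDiff, mul_sub, sub_mul, Finset.sum_sub_distrib, hshift]

theorem sum_sum_mul_plaquette {H : Type*} [AddCommGroup H] [Fintype H] (s : G) (t : H)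
    (h a b : G → H → R) :
    ∑ i, ∑ j, h i j * (a i j - a i (j + t) - b i j + b (i + s) j) =
      ∑ i, ∑ j, (-Δ_[-t] (h i)) j * a i j + ∑ i, ∑ j, Δ_[-s] h i j * b i j := by
  have hplaquette (i : G) (j : H) : a i j - a i (j + t) - b i j + b (i + s) j =
      Δ_[s] (b · j) i - Δ_[t] (a i) j := by
    simp only [fwdDiff]
    abel
  have ha (i : G) : ∑ j, h i j * Δ_[t] (a i) j = ∑ j, Δ_[-t] (h i) j * a i j :=
    sum_mul_fwdDiff t (h i) (a i)
  have hb : ∑ i, ∑ j, h i j * Δ_[s] (b · j) i = ∑ i, ∑ j, Δ_[-s] h i j * b i j := by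
    rw [Finset.sum_comm, Finset.sum_comm (f := fun i j => Δ_[-s] h i j * b i j)]
    exact Finset.sum_congr rfl fun j _ => sum_mul_fwdDiff s (h · j) (b · j)
  simp only [hplaquette, mul_sub, Finset.sum_sub_distrib, ha, hb, Pi.neg_apply, neg_mul,
    Finset.sum_neg_distrib]
  abel

end FiniteDifferences

section Orthogonality

theorem integral_Icc_exp_two_pi_I_int_mul (k : ℤ) :
    ∫ t in Icc (0 : ℝ) 1, Complex.exp (2 * Real.pi * Complex.I * (k * t)) =
      if k = 0 then 1 else 0 := by
  rw [integral_Icc_eq_integral_Ioc, ← intervalIntegral.integral_of_le zero_le_one]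
  split_ifs with hk
  · simp [hk]
  · have hc : 2 * Real.pi * Complex.I * k ≠ 0 :=
      mul_ne_zero Complex.two_pi_I_ne_zero (Int.cast_ne_zero.mpr hk)
    have hexp : Complex.exp (2 * Real.pi * Complex.I * k) = 1 :=
      Complex.exp_eq_one_iff.mpr ⟨k, mul_comm _ _⟩
    simp_rw [← mul_assoc]
    rw [integral_exp_mul_complex hc]
    simp [hexp]

theorem setIntegral_Icc_prod_eq_prod {ι 𝕜 : Type*} [Fintype ι] [RCLike 𝕜] {E : ι → Type*}
    [∀ i, Preorder (E i)] [∀ i, MeasureSpace (E i)] [∀ i, SigmaFinite (volume : Measure (E i))]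
    (a b : ∀ i, E i) (f : ∀ i, E i → 𝕜) :
    ∫ x in Icc a b, ∏ i, f i (x i) = ∏ i, ∫ t in Icc (a i) (b i), f i t := by
  rw [← pi_univ_Icc, volume_pi, Measure.restrict_pi_pi, integral_fintype_prod_eq_prod]

variable {ι κ : Type*} [Fintype ι] [Fintype κ]

/-- The character `x ↦ exp (2πi ∑ kᵢⱼ xᵢⱼ)` of the torus `(ℝ/ℤ)^(ι × κ)` with integer frequencies
`k`, the Fourier mode to which the gauge integral reduces. It is encoded as a periodic function on
curried families of real coordinates, so that it can be integrated over the unit cube. -/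
noncomputable def torusCharacter (k : ι → κ → ℤ) (x : ι → κ → ℝ) : ℂ :=
  Complex.exp (2 * Real.pi * Complex.I * ∑ i, ∑ j, (k i j : ℂ) * (x i j : ℂ))

theorem torusCharacter_eq_prod (k : ι → κ → ℤ) (x : ι → κ → ℝ) :
    torusCharacter k x =
      ∏ i, ∏ j, Complex.exp (2 * Real.pi * Complex.I * (k i j * x i j)) := by
  simp only [torusCharacter, Finset.mul_sum, Complex.exp_sum]

theorem integral_Icc_torusCharacter (k : ι → κ → ℤ) :
    ∫ x in Icc 0 1, torusCharacter k x = if k = 0 then 1 else 0 := by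
  calc
    ∫ x in Icc 0 1, torusCharacter k x
      = ∏ i, ∫ y in Icc (0 : κ → ℝ) 1,
          ∏ j, Complex.exp (2 * Real.pi * Complex.I * (k i j * y j)) := by
        simp_rw [torusCharacter_eq_prod]
        exact setIntegral_Icc_prod_eq_prod 0 1 fun i (y : κ → ℝ) =>
          ∏ j, Complex.exp (2 * Real.pi * Complex.I * (k i j * y j))
    _ = ∏ i, ∏ j, ∫ t in Icc (0 : ℝ) 1,
          Complex.exp (2 * Real.pi * Complex.I * (k i j * t)) :=
        Finset.prod_congr rfl fun i _ => setIntegral_Icc_prod_eq_prod 0 1 fun j (t : ℝ) =>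
          Complex.exp (2 * Real.pi * Complex.I * (k i j * t))
    _ = if k = 0 then 1 else 0 := by
        simp [integral_Icc_exp_two_pi_I_int_mul, Finset.prod_ite_zero, funext_iff]

theorem integral_Icc_torusCharacter_mul {ι' κ' : Type*} [Fintype ι'] [Fintype κ']
    (k : ι → κ → ℤ) (l : ι' → κ' → ℤ) :
    ∫ x in Icc (0 : (ι → κ → ℝ) × (ι' → κ' → ℝ)) 1, torusCharacter k x.1 * torusCharacter l x.2 =
      if k = 0 ∧ l = 0 then 1 else 0 := by
  have hIcc : Icc (0 : (ι → κ → ℝ) × (ι' → κ' → ℝ)) 1 = Icc 0 1 ×ˢ Icc 0 1 := Icc_prod_eq _ _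
  rw [hIcc, Measure.volume_eq_prod, setIntegral_prod_mul, integral_Icc_torusCharacter,
    integral_Icc_torusCharacter, ite_zero_mul_ite_zero, mul_one]

end Orthogonality

section Lattice

variable {G H : Type*} [AddCommGroup G] [AddCommGroup H] [Fintype G] [Fintype H]

theorem exp_sum_sum_mul_plaquette (s : G) (t : H) (h : G → H → ℤ) (a b : G → H → ℝ) :
    Complex.exp (2 * Real.pi * Complex.I * ∑ i, ∑ j, (h i j : ℂ) *
        ((a i j - a i (j + t) - b i j + b (i + s) j : ℝ) : ℂ)) =
      torusCharacter (fun i => -Δ_[-t] (h i)) a * torusCharacter (Δ_[-s] h) b := by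
  rw [torusCharacter, torusCharacter, ← Complex.exp_add, ← mul_add]
  push_cast
  rw [sum_sum_mul_plaquette s t (fun i j => (h i j : ℂ)) (fun i j => (a i j : ℂ))
    (fun i j => (b i j : ℂ))]
  simp [fwdDiff]

theorem stmt17_general (s : G) (t : H) (h : G → H → ℤ)
    [Decidable (Periodic h s ∧ ∀ i, Periodic (h i) t)] :
    (∫ x in Icc (0 : (G → H → ℝ) × (G → H → ℝ)) 1,
        Complex.exp (2 * Real.pi * Complex.I *
          ∑ i, ∑ j, (h i j : ℂ) *
            ((x.1 i j - x.1 i (j + t) - x.2 i j + x.2 (i + s) j : ℝ) : ℂ))) =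
      if Periodic h s ∧ ∀ i, Periodic (h i) t then 1 else 0 := by
  have ha : (fun i => -Δ_[-t] (h i)) = 0 ↔ ∀ i, Periodic (h i) t := by
    simp only [funext_iff (g := (0 : G → H → ℤ)), Pi.zero_apply, neg_eq_zero, fwdDiff_eq_zero_iff,
      periodic_neg_iff]
  have hb : Δ_[-s] h = 0 ↔ Periodic h s := fwdDiff_eq_zero_iff.trans periodic_neg_iff
  simp_rw [exp_sum_sum_mul_plaquette, integral_Icc_torusCharacter_mul]
  exact if_congr ((and_congr ha hb).trans and_comm) rfl rfl

end Lattice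

open Fin.CommRing in
theorem apply_eq_apply_of_periodic_one {n : ℕ} [NeZero n] {α : Type*} {f : Fin n → α}
    (hf : Periodic f 1) (i j : Fin n) : f i = f j := by
  have eq_apply_zero (i : Fin n) : f i = f 0 := by simpa using hf.nat_mul_eq i.val
  rw [eq_apply_zero i, eq_apply_zero j]

theorem periodic_one_and_forall_periodic_one_iff {m n : ℕ} [NeZero m] [NeZero n] {α : Type*}
    {f : Fin m → Fin n → α} :
    (Periodic f 1 ∧ ∀ i, Periodic (f i) 1) ↔ ∀ i j i' j', f i j = f i' j' := by
  constructor
  · rintro ⟨hrows, hcols⟩ i j i' j'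
    rw [apply_eq_apply_of_periodic_one hrows i i', apply_eq_apply_of_periodic_one (hcols i') j j']
  · exact fun hf => ⟨fun i => funext fun j => hf _ j _ j, fun i j => hf i _ i _⟩

theorem stmt17 (L : ℕ) [NeZero L] (h : Fin L → Fin L → ℤ) :
    (∫ x in Set.Icc (0 : (Fin L → Fin L → ℝ) × (Fin L → Fin L → ℝ)) 1,
        Complex.exp (2 * Real.pi * Complex.I *
          ∑ i, ∑ j, (h i j : ℂ) *
            ((x.1 i j - x.1 i (j + 1) - x.2 i j + x.2 (i + 1) j : ℝ) : ℂ))) =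
      if ∀ i j i' j' : Fin L, h i j = h i' j' then 1 else 0 := by
  classical
  exact (stmt17_general 1 1 h).trans (if_congr periodic_one_and_forall_periodic_one_iff rfl rfl)
end
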